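/- arXiv:2109.03342 — 2 statements merged into one kernel-verified Lean document; each statement's English description precedes it below -/
import Mathlib

section
/- (Simplified first permutation moment under centering.) Let N ≥ 2 and let a = (a_{ij})_{1≤i,j≤N}, b = (b_{ij})_{1≤i,j≤N} be real arrays with ∑_{i,j} a_{ij} = 0 and ∑_{i,j} b_{ij} = 0. Then, with Γ(π) = ∑_{i,j} a_{ij} b_{π(i)π(j)} and π uniformly distributed over the N! permutations of {1,…,N}, E[Γ] = (1/(N−1)) (∑_{i=1}^N a_{ii}) (∑_{i=1}^N b_{ii}). -/
open MeasureTheory ProbabilityTheory Filter Finset Topology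

/-- Generalized correlation coefficient `Γ(π) = ∑_{i,j} a_{ij} b_{π(i)π(j)}`. -/
noncomputable def gammaStat (N : ℕ) (a b : Fin N → Fin N → ℝ) (π : Equiv.Perm (Fin N)) : ℝ :=
  ∑ i, ∑ j, a i j * b (π i) (π j)

/-- Expectation of a statistic of a uniformly random permutation of `{1,…,N}`. -/
noncomputable def permE (N : ℕ) (f : Equiv.Perm (Fin N) → ℝ) : ℝ :=
  (∑ π : Equiv.Perm (Fin N), f π) / (N.factorial : ℝ)

/-- Law of a real statistic of a uniformly random permutation of `{1,…,N}`. -/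
noncomputable def permLaw (N : ℕ) (f : Equiv.Perm (Fin N) → ℝ) : ProbabilityMeasure ℝ :=
  ⟨((PMF.uniformOfFintype (Equiv.Perm (Fin N))).map f).toMeasure, inferInstance⟩

/-- The standard normal distribution `N(0,1)` as a probability measure on `ℝ`. -/
noncomputable def stdGaussian : ProbabilityMeasure ℝ := ⟨gaussianReal 0 1, inferInstance⟩

/-- `x_N ≍ y_N` : there are constants `0 < c ≤ C` with `c y_N ≤ x_N ≤ C y_N` for all large `N`. -/
def AsympEquiv (x y : ℕ → ℝ) : Prop :=
  ∃ c C : ℝ, 0 < c ∧ c ≤ C ∧ ∀ᶠ N in atTop, c * y N ≤ x N ∧ x N ≤ C * y N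

/-- `max_{i,j} |a_{ij}|`. -/
noncomputable def arrMax (N : ℕ) (a : Fin N → Fin N → ℝ) : ℝ := ⨆ i, ⨆ j, |a i j|

/-!
Averaging `f (g • x)` over a finite group amounts to averaging `f` over the orbit of `x`. A
2-transitive action, such as that of all permutations, has two orbits on pairs of indices, the
diagonal and its complement, so in the mean of `∑ i, ∑ j, a i j * b (g • i) (g • j)` the array `b`
may be replaced by its average over each of them. For arrays of total sum zero the off-diagonal
sums are minus the traces, and `1 / n + 1 / (n * (n - 1)) = 1 / (n - 1)`.
-/

section OrbitAverage

open MulAction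
open scoped BigOperators

variable {G ι K : Type*} [Group G] [MulAction G ι]

lemma orbit_eq_offDiag_of_two_pretransitive [IsMultiplyPretransitive G ι 2] {i j : ι}
    (hij : i ≠ j) : orbit G (i, j) = (Set.univ : Set ι).offDiag := by
  ext ⟨k, l⟩
  simp only [mem_orbit_iff, Prod.smul_mk, Prod.mk.injEq, Set.mem_offDiag, Set.mem_univ,
    true_and]
  constructor
  · rintro ⟨g, rfl, rfl⟩
    exact (MulAction.injective g).ne hij
  · exact is_two_pretransitive_iff.1 ‹_› hij

lemma sum_sum_eq_sum_diag_add_sum_offDiag {M : Type*} [AddCommMonoid M] (s : Finset ι)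
    (f : ι → ι → M) :
    ∑ i ∈ s, ∑ j ∈ s, f i j = ∑ i ∈ s, f i i + ∑ p ∈ s.offDiag, f p.1 p.2 := by
  classical
  rw [← sum_product', ← diag_union_offDiag, sum_union (disjoint_diag_offDiag s), sum_diag]

variable [Fintype G]

lemma expect_smul_eq_expect_orbit {M : Type*} [AddCommMonoid M] [Module ℚ≥0 M] {x : ι}
    {s : Finset ι} (hs : orbit G x = s) (f : ι → M) :
    𝔼 g : G, f (g • x) = 𝔼 y ∈ s, f y := by
  have mem_iff (y : ι) : y ∈ s ↔ y ∈ orbit G x := by rw [hs, mem_coe]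
  have basepoint_change : ∀ y ∈ s, 𝔼 g : G, f (g • y) = 𝔼 g : G, f (g • x) := by
    intro y hy
    obtain ⟨h, rfl⟩ := (mem_iff y).1 hy
    exact Fintype.expect_equiv (Equiv.mulRight h) _ _ fun g ↦ by simp [mul_smul]
  have translate (g : G) : 𝔼 y ∈ s, f (g • y) = 𝔼 y ∈ s, f y :=
    expect_equiv (toPerm g) (fun y ↦ by simp [mem_iff, ← orbit_eq_iff]) fun _ _ ↦ rfl
  have s_nonempty : s.Nonempty := ⟨x, (mem_iff x).2 (mem_orbit_self x)⟩
  calc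
    𝔼 g : G, f (g • x) = 𝔼 y ∈ s, 𝔼 g : G, f (g • y) := by
      rw [expect_congr rfl basepoint_change, expect_const s_nonempty]
    _ = 𝔼 g : G, 𝔼 y ∈ s, f (g • y) := expect_comm _ _ _
    _ = 𝔼 y ∈ s, f y := by simp only [translate, Fintype.expect_const]

lemma expect_sum_mul_smul_smul [Fintype ι] [IsMultiplyPretransitive G ι 2]
    [Semiring K] [Module ℚ≥0 K] [SMulCommClass ℚ≥0 K K] (a b : ι → ι → K) :
    𝔼 g : G, ∑ i, ∑ j, a i j * b (g • i) (g • j) =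
      (∑ i, a i i) * 𝔼 i, b i i +
        (∑ p ∈ univ.offDiag, a p.1 p.2) * 𝔼 p ∈ univ.offDiag, b p.1 p.2 := by
  have := isPretransitive_of_is_two_pretransitive (G := G) (α := ι)
  have diagonal (i : ι) : 𝔼 g : G, b (g • i) (g • i) = 𝔼 k, b k k :=
    expect_smul_eq_expect_orbit (by rw [orbit_eq_univ, coe_univ]) fun k ↦ b k k
  have off_diagonal : ∀ p ∈ (univ : Finset ι).offDiag,
      𝔼 g : G, b (g • p.1) (g • p.2) = 𝔼 q ∈ univ.offDiag, b q.1 q.2 := fun p hp ↦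
    expect_smul_eq_expect_orbit (by rw [coe_offDiag, coe_univ,
      orbit_eq_offDiag_of_two_pretransitive (mem_offDiag.1 hp).2.2]) fun q : ι × ι ↦ b q.1 q.2
  simp only [sum_sum_eq_sum_diag_add_sum_offDiag, expect_add_distrib, expect_sum_comm,
    ← mul_expect, diagonal, sum_mul]
  exact congrArg _ (sum_congr rfl fun p hp ↦ by rw [off_diagonal p hp])

theorem permE_gammaStat_centered_general [Fintype ι] [Nontrivial ι]
    [IsMultiplyPretransitive G ι 2] [Field K] [CharZero K] (a b : ι → ι → K)
    (ha : ∑ i, ∑ j, a i j = 0) (hb : ∑ i, ∑ j, b i j = 0) :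
    𝔼 g : G, ∑ i, ∑ j, a i j * b (g • i) (g • j) =
      (1 / ((Fintype.card ι : K) - 1)) * (∑ i, a i i) * (∑ i, b i i) := by
  have off_diagonal_sum {c : ι → ι → K} (hc : ∑ i, ∑ j, c i j = 0) :
      ∑ p ∈ univ.offDiag, c p.1 p.2 = -∑ i, c i i :=
    eq_neg_of_add_eq_zero_right (by rw [← sum_sum_eq_sum_diag_add_sum_offDiag, hc])
  have card_offDiag : ((univ : Finset ι).offDiag.card : K) =
      Fintype.card ι * ((Fintype.card ι : K) - 1) := by
    rw [offDiag_card, card_univ, Nat.cast_sub (Nat.le_mul_self _), Nat.cast_mul, mul_sub_one]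
  have card_ne_zero : (Fintype.card ι : K) ≠ 0 := Nat.cast_ne_zero.2 Fintype.card_ne_zero
  have card_sub_one_ne_zero : (Fintype.card ι : K) - 1 ≠ 0 :=
    sub_ne_zero.2 (Nat.cast_ne_one.2 Fintype.one_lt_card.ne')
  rw [expect_sum_mul_smul_smul, expect_eq_sum_div_card, expect_eq_sum_div_card,
    off_diagonal_sum ha, off_diagonal_sum hb, card_offDiag, card_univ]
  field_simp
  ring

end OrbitAverage

/-- **Simplified first permutation moment under centering.** -/
theorem permE_gammaStat_centered (N : ℕ) (hN : 2 ≤ N) (a b : Fin N → Fin N → ℝ)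
    (ha : ∑ i, ∑ j, a i j = 0) (hb : ∑ i, ∑ j, b i j = 0) :
    permE N (gammaStat N a b) =
      (1 / ((N : ℝ) - 1)) * (∑ i, a i i) * (∑ i, b i i) := by
  have : Nontrivial (Fin N) := Fin.nontrivial_iff_two_le.2 hN
  have := Equiv.Perm.isMultiplyPretransitive (Fin N) 2
  simpa [permE, gammaStat, Fintype.expect_eq_sum_div_card, Fintype.card_perm] using
    permE_gammaStat_centered_general (G := Equiv.Perm (Fin N)) a b ha hb
end

section
/- (Vanishing of odd scaled moments.) Let a^{(N)}, b^{(N)} be sequences of real N×N arrays with a_{ij} = a_{ji}, b_{ij} = b_{ji}, ∑_{i,j} a_{ij} = ∑_{i,j} b_{ij} = 0, and ∑_{i,j,k} a_{ij} a_{ik} ≍ N^3 (max_{i,j} |a_{ij}|)^2, ∑_{i,j,k} b_{ij} b_{ik} ≍ N^3 (max_{i,j} |b_{ij}|)^2 as N → ∞. Let Γ_N(π) = ∑_{i,j} a_{ij} b_{π(i)π(j)} with π uniform over permutations of {1,…,N}, and set σ_N = 2 √( (∑_{i,j,k} a_{ij} a_{ik})(∑_{i,j,k} b_{ij} b_{ik})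 / N^3 ). Then for every fixed nonnegative integer m, E[(Γ_N/σ_N)^{2m+1}] → 0 as N → ∞. -/
open MeasureTheory ProbabilityTheory Filter Finset Topology

open Asymptotics
open Equiv (Perm swap)
open scoped BigOperators

/-!
Subtracting the row means splits `Γ` (Hoeffding's decomposition) into `2N · L`, where `L` is the
linear rank statistic `∑ i, α i * β (π i)` of the row means, plus the coefficient `D` of the doubly
centered arrays. Both parts are studied through the exchangeable pairs `(π, π ∘ (i j))` of Stein's
method: the average increment over all swaps is an (almost) exact multiple of the statistic, so
moments are controlled by moments of the increments. For bounded arrays this gives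
`𝔼 L ^ (2k) = O(N ^ k)` and `𝔼 D ^ (2k) = O(N ^ (2k))`, the increments of `D` being themselves
linear rank statistics.

The sum of the squared increments of `L` is constant up to a relative error of order `N ^ (-1/2)`,
so the odd moments of `L` satisfy the Gaussian recursion up to lower order and
`𝔼 L ^ (2m+1) = O(N ^ m)`, a factor `√N` less than the even moments suggest. As `D` is a factor `√N`
smaller than `2N · L`, the same gain persists: `𝔼 Γ ^ (2m+1) = O(N ^ (3m+1))`. The hypotheses on the
row sums make `σ` of order at least `N ^ (3/2)` for arrays normalized by their maxima, so the scaled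
odd moments are `O(N ^ (-1/2))`.
-/

lemma max_abs_pow_le_add (x y : ℝ) (k : ℕ) :
    max |x| |y| ^ (2 * k) ≤ x ^ (2 * k) + y ^ (2 * k) := by
  have hx : 0 ≤ x ^ (2 * k) := (even_two_mul k).pow_nonneg x
  have hy : 0 ≤ y ^ (2 * k) := (even_two_mul k).pow_nonneg y
  rcases max_choice |x| |y| with h | h <;> rw [h, (even_two_mul k).pow_abs] <;> linarith

lemma abs_pow_sub_pow_le_mul_add (x y : ℝ) (k : ℕ) :
    |x ^ (2 * k + 1) - y ^ (2 * k + 1)| ≤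
      (2 * k + 1) * |x - y| * (x ^ (2 * k) + y ^ (2 * k)) := by
  calc |x ^ (2 * k + 1) - y ^ (2 * k + 1)|
      ≤ |x - y| * (2 * k + 1 : ℕ) * max |x| |y| ^ (2 * k) := abs_pow_sub_pow_le ..
    _ = (2 * k + 1) * |x - y| * max |x| |y| ^ (2 * k) := by push_cast; ring
    _ ≤ _ := by gcongr; exact max_abs_pow_le_add x y k

lemma sub_mul_pow_sub_pow_le (x y : ℝ) (k : ℕ) :
    (x - y) * (x ^ (2 * k + 1) - y ^ (2 * k + 1)) ≤
      (2 * k + 1) * (x - y) ^ 2 * (x ^ (2 * k) + y ^ (2 * k)) := by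
  calc (x - y) * (x ^ (2 * k + 1) - y ^ (2 * k + 1))
      ≤ |x - y| * |x ^ (2 * k + 1) - y ^ (2 * k + 1)| := by
        rw [← abs_mul]; exact le_abs_self _
    _ ≤ |x - y| * ((2 * k + 1) * |x - y| * (x ^ (2 * k) + y ^ (2 * k))) := by
        gcongr; exact abs_pow_sub_pow_le_mul_add x y k
    _ = _ := by rw [← sq_abs (x - y)]; ring

lemma add_pow_two_mul_le (x y : ℝ) (k : ℕ) :
    (x + y) ^ (2 * k) ≤ 4 ^ k * (x ^ (2 * k) + y ^ (2 * k)) := by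
  have hx : 0 ≤ x ^ (2 * k) := (even_two_mul k).pow_nonneg x
  have hy : 0 ≤ y ^ (2 * k) := (even_two_mul k).pow_nonneg y
  calc (x + y) ^ (2 * k)
      ≤ 2 ^ (2 * k - 1) * (x ^ (2 * k) + y ^ (2 * k)) := (even_two_mul k).add_pow_le
    _ ≤ 2 ^ (2 * k) * (x ^ (2 * k) + y ^ (2 * k)) := by gcongr <;> simp
    _ = _ := by rw [pow_mul]; norm_num

lemma sub_pow_two_mul_le (x y : ℝ) (k : ℕ) :
    (x - y) ^ (2 * k) ≤ 4 ^ k * (x ^ (2 * k) + y ^ (2 * k)) := by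
  simpa [sub_eq_add_neg, (even_two_mul k).neg_pow] using add_pow_two_mul_le x (-y) k

lemma abs_add_pow_sub_pow_le (x y : ℝ) (m : ℕ) :
    |(x + y) ^ (2 * m + 1) - x ^ (2 * m + 1)| ≤
      (2 * m + 1) * (4 ^ m + 1) * (|y| * (x ^ (2 * m) + y ^ (2 * m))) := by
  have hy : 0 ≤ y ^ (2 * m) := (even_two_mul m).pow_nonneg y
  calc |(x + y) ^ (2 * m + 1) - x ^ (2 * m + 1)|
      ≤ (2 * m + 1) * |x + y - x| * ((x + y) ^ (2 * m) + x ^ (2 * m)) :=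
        abs_pow_sub_pow_le_mul_add ..
    _ ≤ (2 * m + 1) * |y| *
        (4 ^ m * (x ^ (2 * m) + y ^ (2 * m)) + (x ^ (2 * m) + y ^ (2 * m))) := by
        rw [add_sub_cancel_left]
        gcongr
        · exact add_pow_two_mul_le x y m
        · linarith
    _ = _ := by ring

lemma mul_pow_le_mul_pow_add {u v ε : ℝ} (hu : 0 ≤ u) (hv : 0 ≤ v) (hε : 0 < ε) (k : ℕ) :
    u * v ^ k ≤ ε * v ^ (k + 1) + ε⁻¹ ^ k * u ^ (k + 1) := by
  rcases le_total u (ε * v) with h | h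
  · calc u * v ^ k ≤ ε * v * v ^ k := by gcongr
      _ = ε * v ^ (k + 1) := by ring
      _ ≤ _ := le_add_of_nonneg_right (by positivity)
  · have hvu : v ≤ ε⁻¹ * u := by rwa [le_inv_mul_iff₀ hε]
    calc u * v ^ k ≤ u * (ε⁻¹ * u) ^ k := by gcongr
      _ = ε⁻¹ ^ k * u ^ (k + 1) := by ring
      _ ≤ _ := le_add_of_nonneg_left (by positivity)

lemma sq_mul_mul_abs_pow_le {n r : ℝ} (hn : 0 ≤ n) (hr : 0 ≤ r) (x : ℝ) (k : ℕ) :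
    n ^ 2 * r * |x| ^ (2 * k + 1) ≤
      n * (x ^ (2 * (k + 1)) / 4 + 16 ^ (k + 1) / 4 * (n * r) ^ (2 * (k + 1))) := by
  have hyoung := mul_pow_le_mul_pow_add (mul_nonneg hn hr) (abs_nonneg x)
    (show (0 : ℝ) < 4⁻¹ by norm_num) (2 * k + 1)
  have hconst : (16 : ℝ) ^ (k + 1) = 4 * 4 ^ (2 * k + 1) := by
    rw [show (16 : ℝ) = 4 ^ 2 by norm_num, ← pow_mul]; ring
  rw [inv_inv, show 2 * k + 1 + 1 = 2 * (k + 1) by ring, (even_two_mul (k + 1)).pow_abs] at hyoung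
  calc n ^ 2 * r * |x| ^ (2 * k + 1) = n * (n * r * |x| ^ (2 * k + 1)) := by ring
    _ ≤ n * (4⁻¹ * x ^ (2 * (k + 1)) + 4 ^ (2 * k + 1) * (n * r) ^ (2 * (k + 1))) := by gcongr
    _ = _ := by rw [hconst]; ring

lemma abs_pow_sub_pow_sub_le (x y : ℝ) (q : ℕ) :
    |x ^ (q + 2) - y ^ (q + 2) - (q + 2) * (x - y) * x ^ (q + 1)| ≤
      (q + 2) ^ 2 * (x - y) ^ 2 * max |x| |y| ^ q := by
  set M := max |x| |y|
  have : 0 ≤ M := (abs_nonneg x).trans (le_max_left _ _)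
  induction q with
  | zero =>
    have hsq : x ^ (0 + 2) - y ^ (0 + 2) - ((0 : ℕ) + 2) * (x - y) * x ^ (0 + 1) =
        -(x - y) ^ 2 := by
      push_cast; ring
    rw [hsq, abs_neg, abs_of_nonneg (sq_nonneg _)]
    norm_num
    nlinarith [sq_nonneg (x - y)]
  | succ q ih =>
    have hrec : x ^ (q + 1 + 2) - y ^ (q + 1 + 2) -
          ((q + 1 : ℕ) + 2) * (x - y) * x ^ (q + 1 + 1) =
        x * (x ^ (q + 2) - y ^ (q + 2) - (q + 2) * (x - y) * x ^ (q + 1)) -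
          (x - y) * (x ^ (q + 2) - y ^ (q + 2)) := by
      push_cast; ring
    have hfirst : |x ^ (q + 2) - y ^ (q + 2)| ≤ |x - y| * (q + 2) * M ^ (q + 1) := by
      exact_mod_cast abs_pow_sub_pow_le x y (q + 2)
    calc _ ≤ |x| * |x ^ (q + 2) - y ^ (q + 2) - (q + 2) * (x - y) * x ^ (q + 1)| +
          |x - y| * |x ^ (q + 2) - y ^ (q + 2)| := by
          rw [hrec, ← abs_mul, ← abs_mul]
          exact abs_sub _ _
      _ ≤ M * ((q + 2) ^ 2 * (x - y) ^ 2 * M ^ q) +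
          |x - y| * (|x - y| * (q + 2) * M ^ (q + 1)) := by
          gcongr
          exact le_max_left _ _
      _ = ((q + 2) ^ 2 + (q + 2)) * (x - y) ^ 2 * M ^ (q + 1) := by
          rw [← sq_abs (x - y)]; ring
      _ ≤ _ := by
          push_cast
          gcongr
          nlinarith

section Exchangeable

variable {ι : Type*} [DecidableEq ι]

/-- The increment `f(π) - f(π ∘ (i j))` of a permutation statistic along the exchangeable pair
`(π, π ∘ (i j))` used in Stein's method. -/
def swapDiff (f : Perm ι → ℝ) (i j : ι) (π : Perm ι) : ℝ :=
  f π - f (π * swap i j)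

lemma swapDiff_mul_swap (f : Perm ι → ℝ) (i j : ι) (π : Perm ι) :
    swapDiff f i j (π * swap i j) = -swapDiff f i j π := by
  simp [swapDiff, mul_assoc]

variable [Fintype ι]

lemma expect_mul_right (f : Perm ι → ℝ) (τ : Perm ι) : 𝔼 π, f (π * τ) = 𝔼 π, f π :=
  Fintype.expect_equiv (Equiv.mulRight τ) _ _ fun _ => rfl

lemma expect_swapDiff_mul (f g : Perm ι → ℝ) (i j : ι) :
    𝔼 π, swapDiff f i j π * g π = (𝔼 π, swapDiff f i j π * swapDiff g i j π) / 2 := by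
  have h : 𝔼 π, swapDiff f i j π * g (π * swap i j) = -𝔼 π, swapDiff f i j π * g π := by
    rw [← expect_mul_right _ (swap i j), ← expect_neg_distrib]
    simp [swapDiff_mul_swap, mul_assoc]
  calc 𝔼 π, swapDiff f i j π * g π
      = (𝔼 π, swapDiff f i j π * g π - 𝔼 π, swapDiff f i j π * g (π * swap i j)) / 2 := by
        rw [h]; ring
    _ = _ := by rw [← expect_sub_distrib]; simp only [swapDiff, mul_sub]

lemma expect_swapDiff_mul_pow_le (f : Perm ι → ℝ) (k : ℕ) (i j : ι) :
    𝔼 π, swapDiff f i j π * f π ^ (2 * k + 1) ≤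
      (2 * k + 1) * 𝔼 π, swapDiff f i j π ^ 2 * f π ^ (2 * k) := by
  have hswap : 𝔼 π, swapDiff f i j π ^ 2 * f (π * swap i j) ^ (2 * k) =
      𝔼 π, swapDiff f i j π ^ 2 * f π ^ (2 * k) := by
    rw [← expect_mul_right _ (swap i j)]
    simp [swapDiff_mul_swap, mul_assoc]
  have hpair : 𝔼 π, swapDiff f i j π * swapDiff (fun π => f π ^ (2 * k + 1)) i j π ≤
      (2 * k + 1) * (2 * 𝔼 π, swapDiff f i j π ^ 2 * f π ^ (2 * k)) := by
    rw [two_mul (𝔼 π, _), ← congrArg (_ + ·) hswap, ← expect_add_distrib, mul_expect]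
    refine expect_le_expect fun π _ => (sub_mul_pow_sub_pow_le _ _ k).trans_eq ?_
    simp only [swapDiff]
    ring
  rw [expect_swapDiff_mul f (fun π => f π ^ (2 * k + 1)) i j]
  linarith

lemma card_mul_expect_swapDiff_mul_pow_le [Nonempty ι] {f : Perm ι → ℝ} {k : ℕ} {M : ℝ} {i j : ι}
    (hM : 𝔼 π, swapDiff f i j π ^ (2 * (k + 1)) ≤ M) :
    Fintype.card ι * 𝔼 π, swapDiff f i j π * f π ^ (2 * k + 1) ≤
      (𝔼 π, f π ^ (2 * (k + 1))) / 2 +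
        (4 * (k + 1)) ^ (k + 1) * (Fintype.card ι : ℝ) ^ (k + 1) * M / 2 := by
  set n : ℝ := (Fintype.card ι : ℝ)
  set K : ℝ := k + 1
  have hK : 0 < K := by positivity
  have young (π : Perm ι) : n * (swapDiff f i j π ^ 2 * f π ^ (2 * k)) ≤
      (4 * K)⁻¹ * f π ^ (2 * (k + 1)) +
        (4 * K) ^ k * n ^ (k + 1) * swapDiff f i j π ^ (2 * (k + 1)) := by
    have h := mul_pow_le_mul_pow_add (u := n * swapDiff f i j π ^ 2) (v := f π ^ 2)
      (ε := (4 * K)⁻¹) (by positivity) (by positivity) (by positivity) k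
    rw [inv_inv] at h
    convert h using 1 <;> ring
  have hexp : n * 𝔼 π, swapDiff f i j π ^ 2 * f π ^ (2 * k) ≤
      (4 * K)⁻¹ * (𝔼 π, f π ^ (2 * (k + 1))) + (4 * K) ^ k * n ^ (k + 1) * M := by
    calc n * 𝔼 π, swapDiff f i j π ^ 2 * f π ^ (2 * k)
        ≤ (4 * K)⁻¹ * (𝔼 π, f π ^ (2 * (k + 1))) +
          (4 * K) ^ k * n ^ (k + 1) * 𝔼 π, swapDiff f i j π ^ (2 * (k + 1)) := by
          simp only [mul_expect, ← expect_add_distrib]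
          exact expect_le_expect fun π _ => young π
      _ ≤ _ := by gcongr
  have hnonneg : 0 ≤ 𝔼 π, swapDiff f i j π ^ 2 * f π ^ (2 * k) :=
    expect_nonneg fun π _ => mul_nonneg (sq_nonneg _) ((even_two_mul k).pow_nonneg _)
  calc n * 𝔼 π, swapDiff f i j π * f π ^ (2 * k + 1)
      ≤ n * ((2 * k + 1) * 𝔼 π, swapDiff f i j π ^ 2 * f π ^ (2 * k)) := by
        gcongr; exact expect_swapDiff_mul_pow_le f k i j
    _ ≤ 2 * K * (n * 𝔼 π, swapDiff f i j π ^ 2 * f π ^ (2 * k)) := by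
        rw [mul_left_comm]
        gcongr
        linarith
    _ ≤ 2 * K * ((4 * K)⁻¹ * (𝔼 π, f π ^ (2 * (k + 1))) + (4 * K) ^ k * n ^ (k + 1) * M) := by
        gcongr
    _ = _ := by field_simp; ring

lemma mul_pow_le_sum_swapDiff_mul_pow_add {f : Perm ι → ℝ} {l r : ℝ} {k : ℕ} {π : Perm ι}
    (hr : 0 ≤ r)
    (hreg : |l * Fintype.card ι * f π - ∑ i, ∑ j, swapDiff f i j π| ≤
      (Fintype.card ι : ℝ) ^ 2 * r) :
    l * Fintype.card ι * f π ^ (2 * (k + 1)) ≤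
      ∑ i, ∑ j, swapDiff f i j π * f π ^ (2 * k + 1) + Fintype.card ι *
        (f π ^ (2 * (k + 1)) / 4 + 16 ^ (k + 1) / 4 * (Fintype.card ι * r) ^ (2 * (k + 1))) := by
  calc l * Fintype.card ι * f π ^ (2 * (k + 1))
      = ∑ i, ∑ j, swapDiff f i j π * f π ^ (2 * k + 1) +
        (l * Fintype.card ι * f π - ∑ i, ∑ j, swapDiff f i j π) * f π ^ (2 * k + 1) := by
        simp only [← sum_mul]; ring
    _ ≤ ∑ i, ∑ j, swapDiff f i j π * f π ^ (2 * k + 1) +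
        (Fintype.card ι : ℝ) ^ 2 * r * |f π| ^ (2 * k + 1) := by
        refine add_le_add_right ((le_abs_self _).trans ?_) _
        rw [abs_mul, abs_pow]
        gcongr
    _ ≤ _ := add_le_add_right (sq_mul_mul_abs_pow_le (by positivity) hr (f π) k) _

/-- `hreg` is Stein's linear regression condition for the exchangeable pair, with remainder `r`. -/
lemma expect_pow_two_mul_le [Nonempty ι] {f : Perm ι → ℝ} {k : ℕ} {l r M : ℝ} (hl : 1 ≤ l)
    (hr : 0 ≤ r)
    (hreg : ∀ π, |l * Fintype.card ι * f π - ∑ i, ∑ j, swapDiff f i j π| ≤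
      (Fintype.card ι : ℝ) ^ 2 * r)
    (hM : ∀ i j, 𝔼 π, swapDiff f i j π ^ (2 * k) ≤ M) :
    𝔼 π, f π ^ (2 * k) ≤ 2 * (4 * k) ^ k * (Fintype.card ι : ℝ) ^ k * M +
      16 ^ k * (Fintype.card ι * r) ^ (2 * k) := by
  obtain _ | k := k
  · have hM₀ := hM (Classical.arbitrary ι) (Classical.arbitrary ι)
    simp only [mul_zero, pow_zero, Fintype.expect_const] at hM₀ ⊢
    linarith
  set n : ℝ := (Fintype.card ι : ℝ)
  have hn : 0 < n := Nat.cast_pos.2 Fintype.card_pos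
  set E := 𝔼 π, f π ^ (2 * (k + 1))
  set T := (4 * (k + 1 : ℝ)) ^ (k + 1) * n ^ (k + 1) * M
  set R := 16 ^ (k + 1) / 4 * (n * r) ^ (2 * (k + 1))
  have hpair (i j : ι) :
      𝔼 π, swapDiff f i j π * f π ^ (2 * k + 1) ≤ n⁻¹ * (E / 2 + T / 2) := by
    rw [le_inv_mul_iff₀ hn]
    exact card_mul_expect_swapDiff_mul_pow_le (hM i j)
  have hmain : l * n * E ≤ n * (E / 2 + T / 2) + n * (E / 4 + R) := by
    calc l * n * E
        ≤ 𝔼 π, (∑ i, ∑ j, swapDiff f i j π * f π ^ (2 * k + 1) +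
          n * (f π ^ (2 * (k + 1)) / 4 + R)) := by
          rw [mul_expect]
          exact expect_le_expect fun π _ => mul_pow_le_sum_swapDiff_mul_pow_add hr (hreg π)
      _ = ∑ i, ∑ j, 𝔼 π, swapDiff f i j π * f π ^ (2 * k + 1) + n * (E / 4 + R) := by
          simp only [expect_add_distrib, expect_sum_comm, ← mul_expect, ← expect_div,
            Fintype.expect_const, E]
      _ ≤ ∑ _i : ι, ∑ _j : ι, n⁻¹ * (E / 2 + T / 2) + n * (E / 4 + R) := by
          gcongr with i _ j _
          exact hpair i j
      _ = _ := by simp [n, mul_add]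
  have hE : 0 ≤ E := expect_nonneg fun π _ => (even_two_mul (k + 1)).pow_nonneg _
  have hbound : E ≤ 2 * T + 4 * R := by
    have hcancel : l * E ≤ E / 2 + T / 2 + (E / 4 + R) :=
      le_of_mul_le_mul_left (by linarith) hn
    nlinarith
  push_cast
  simp only [T, R] at hbound
  linarith

end Exchangeable

section LinStat

variable {ι : Type*} [Fintype ι]

/-- The linear rank statistic `∑ i, α i * β (π i)`. -/
def linStat (α β : ι → ℝ) (π : Perm ι) : ℝ := ∑ i, α i * β (π i)

lemma linStat_sub_right (α β γ : ι → ℝ) (π : Perm ι) :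
    linStat α (β - γ) π = linStat α β π - linStat α γ π := by
  simp [linStat, mul_sub]

lemma sum_sum_sub_mul_sub {g : ι → ℝ} (hg : ∑ i, g i = 0) (h : ι → ℝ) :
    ∑ i, ∑ j, (g i - g j) * (h i - h j) = 2 * Fintype.card ι * ∑ i, g i * h i := by
  simp only [sub_mul, mul_sub, sum_sub_distrib, sum_const, card_univ, nsmul_eq_mul]
  simp only [← mul_sum, ← sum_mul, hg]
  ring

variable [DecidableEq ι]

lemma sum_sub_swap_mul (i j : ι) (g h : ι → ℝ) :
    ∑ l, (g l - g (swap i j l)) * h l = (g i - g j) * (h i - h j) := by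
  have hsupp (l : ι) (hl : l ∉ ({i, j} : Finset ι)) : (g l - g (swap i j l)) * h l = 0 := by
    simp only [Finset.mem_insert, Finset.mem_singleton, not_or] at hl
    rw [Equiv.swap_apply_of_ne_of_ne hl.1 hl.2, sub_self, zero_mul]
  rw [← sum_subset (subset_univ {i, j}) fun l _ => hsupp l]
  obtain rfl | hij := eq_or_ne i j
  · simp
  · rw [sum_pair hij, Equiv.swap_apply_left, Equiv.swap_apply_right]
    ring

lemma swapDiff_linStat (α β : ι → ℝ) (i j : ι) (π : Perm ι) :
    swapDiff (linStat α β) i j π = (α i - α j) * (β (π i) - β (π j)) := by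
  rw [mul_comm, ← sum_sub_swap_mul i j (fun l => β (π l)) α]
  simp only [swapDiff, linStat, ← sum_sub_distrib, Equiv.Perm.mul_apply]
  exact sum_congr rfl fun l _ => by ring

lemma sum_sum_swapDiff_linStat {α : ι → ℝ} (hα : ∑ i, α i = 0) (β : ι → ℝ) (π : Perm ι) :
    ∑ i, ∑ j, swapDiff (linStat α β) i j π = 2 * Fintype.card ι * linStat α β π := by
  simp only [swapDiff_linStat]
  exact sum_sum_sub_mul_sub hα fun i => β (π i)

lemma abs_swapDiff_linStat_le {α β : ι → ℝ} {A B : ℝ} (hA : ∀ i, |α i| ≤ A) (hB : ∀ i, |β i| ≤ B)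
    (i j : ι) (π : Perm ι) : |swapDiff (linStat α β) i j π| ≤ 4 * (A * B) := by
  have hα : |α i - α j| ≤ 2 * A := (abs_sub _ _).trans (by linarith [hA i, hA j])
  have hβ : |β (π i) - β (π j)| ≤ 2 * B := (abs_sub _ _).trans (by linarith [hB (π i), hB (π j)])
  rw [swapDiff_linStat, abs_mul]
  calc |α i - α j| * |β (π i) - β (π j)| ≤ 2 * A * (2 * B) :=
        mul_le_mul hα hβ (abs_nonneg _) ((abs_nonneg _).trans hα)
    _ = 4 * (A * B) := by ring

variable [Nonempty ι]

lemma expect_linStat_pow_two_mul_le {α β : ι → ℝ} {A B : ℝ} (hα : ∑ i, α i = 0)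
    (hA : ∀ i, |α i| ≤ A) (hB : ∀ i, |β i| ≤ B) (k : ℕ) :
    𝔼 π, linStat α β π ^ (2 * k) ≤ 2 * (64 * k * (A * B) ^ 2 * Fintype.card ι) ^ k := by
  obtain _ | k := k
  · simp
  have hM (i j : ι) : 𝔼 π, swapDiff (linStat α β) i j π ^ (2 * (k + 1)) ≤
      (4 * (A * B)) ^ (2 * (k + 1)) :=
    expect_le univ_nonempty fun π _ => by
      rw [← (even_two_mul (k + 1)).pow_abs]
      exact pow_le_pow_left₀ (abs_nonneg _) (abs_swapDiff_linStat_le hA hB i j π) _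
  have h := expect_pow_two_mul_le (l := 2) one_le_two le_rfl
    (fun π => by simp [sum_sum_swapDiff_linStat hα]) hM
  calc _ ≤ _ := h
    _ = 2 * (4 * (k + 1 : ℕ) * Fintype.card ι * (4 * (A * B)) ^ 2) ^ (k + 1) := by
        simp only [mul_pow, pow_mul]; simp; ring
    _ = _ := by ring

end LinStat

section RandomIndex

variable {ι : Type*} [Fintype ι] [DecidableEq ι]

/-- Precomposing `π` with the swap of `j` and a uniformly chosen `l` turns the index `π j` into the
index `π l`, which is uniform given `π`. -/
lemma card_mul_expect_apply_eq (g : ι → Perm ι → ℝ) (j : ι) :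
    Fintype.card ι * 𝔼 π, g (π j) π = 𝔼 π, ∑ l, g (π l) (π * swap j l) := by
  have hswap (l : ι) : 𝔼 π, g (π l) (π * swap j l) = 𝔼 π, g (π j) π := by
    rw [← expect_mul_right _ (swap j l)]
    simp [mul_assoc]
  simp [expect_sum_comm, hswap]

lemma expect_apply_pow_two_mul_le [Nonempty ι] {g : ι → Perm ι → ℝ} {k : ℕ} {c M : ℝ}
    (hM : ∀ t, 𝔼 π, g t π ^ (2 * k) ≤ M) (hc : ∀ t i j π, |swapDiff (g t) i j π| ≤ c) (j : ι) :
    𝔼 π, g (π j) π ^ (2 * k) ≤ 4 ^ k * (M + c ^ (2 * k)) := by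
  have hn : (0 : ℝ) < Fintype.card ι := Nat.cast_pos.2 Fintype.card_pos
  have hpt (l : ι) (π : Perm ι) : g (π l) (π * swap j l) ^ (2 * k) ≤
      4 ^ k * (g (π l) π ^ (2 * k) + c ^ (2 * k)) := by
    calc g (π l) (π * swap j l) ^ (2 * k)
        = (g (π l) π - swapDiff (g (π l)) j l π) ^ (2 * k) := by simp [swapDiff]
      _ ≤ 4 ^ k * (g (π l) π ^ (2 * k) + swapDiff (g (π l)) j l π ^ (2 * k)) :=
        sub_pow_two_mul_le ..
      _ ≤ _ := by
        rw [← (even_two_mul k).pow_abs (swapDiff (g (π l)) j l π)]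
        gcongr
        exact hc ..
  have hsum : Fintype.card ι * 𝔼 π, g (π j) π ^ (2 * k) ≤
      Fintype.card ι * (4 ^ k * (M + c ^ (2 * k))) := by
    calc Fintype.card ι * 𝔼 π, g (π j) π ^ (2 * k)
        = 𝔼 π, ∑ l, g (π l) (π * swap j l) ^ (2 * k) :=
          card_mul_expect_apply_eq (fun t π => g t π ^ (2 * k)) j
      _ ≤ 𝔼 π : Perm ι, ∑ l, 4 ^ k * (g (π l) π ^ (2 * k) + c ^ (2 * k)) :=
          expect_le_expect fun π _ => sum_le_sum fun l _ => hpt l π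
      _ = 𝔼 π : Perm ι, ∑ t, 4 ^ k * (g t π ^ (2 * k) + c ^ (2 * k)) := by
          congr with π
          exact Equiv.sum_comp π fun t => 4 ^ k * (g t π ^ (2 * k) + c ^ (2 * k))
      _ = ∑ t, 4 ^ k * (𝔼 π, g t π ^ (2 * k) + c ^ (2 * k)) := by
          simp only [expect_sum_comm, ← mul_expect, expect_add_distrib, Fintype.expect_const]
      _ ≤ ∑ _t : ι, 4 ^ k * (M + c ^ (2 * k)) := by
          gcongr with t
          exact hM t
      _ = _ := by simp
  exact le_of_mul_le_mul_left hsum hn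

lemma expect_linStat_apply_pow_two_mul_le [Nonempty ι] {u : ι → ℝ} {q : ι → ι → ℝ} {A B : ℝ}
    (hu : ∑ i, u i = 0) (hA : ∀ i, |u i| ≤ A) (hB : ∀ i j, |q i j| ≤ B) (k : ℕ) (j : ι) :
    𝔼 π, linStat u (q (π j)) π ^ (2 * k) ≤
      3 * (256 * k * (A * B) ^ 2 * Fintype.card ι) ^ k := by
  have hn : (1 : ℝ) ≤ Fintype.card ι := Nat.one_le_cast.2 Fintype.card_pos
  have hc : (4 * (A * B)) ^ (2 * k) ≤ (64 * k * (A * B) ^ 2 * Fintype.card ι) ^ k := by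
    obtain _ | k := k
    · simp
    rw [pow_mul]
    gcongr
    have hk : (1 : ℝ) ≤ (k + 1 : ℕ) := by simp
    nlinarith [mul_le_mul hk hn zero_le_one (by positivity), sq_nonneg (A * B)]
  calc 𝔼 π, linStat u (q (π j)) π ^ (2 * k)
      ≤ 4 ^ k * (2 * (64 * k * (A * B) ^ 2 * Fintype.card ι) ^ k + (4 * (A * B)) ^ (2 * k)) :=
        expect_apply_pow_two_mul_le (fun t => expect_linStat_pow_two_mul_le hu hA (hB t) k)
          (fun t => abs_swapDiff_linStat_le hA (hB t)) j
    _ ≤ 4 ^ k * (2 * (64 * k * (A * B) ^ 2 * Fintype.card ι) ^ k +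
          (64 * k * (A * B) ^ 2 * Fintype.card ι) ^ k) := by gcongr
    _ = 3 * (4 * (64 * k * (A * B) ^ 2 * Fintype.card ι)) ^ k := by rw [mul_pow 4]; ring
    _ = _ := by ring

lemma expect_linStat_sub_pow_two_mul_le [Nonempty ι] {u : ι → ℝ} {q : ι → ι → ℝ} {A B : ℝ}
    (hu : ∑ i, u i = 0) (hA : ∀ i, |u i| ≤ A) (hB : ∀ i j, |q i j| ≤ B) (k : ℕ) (i j : ι) :
    𝔼 π, linStat u (q (π i) - q (π j)) π ^ (2 * k) ≤
      6 * (1024 * k * (A * B) ^ 2 * Fintype.card ι) ^ k := by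
  calc 𝔼 π, linStat u (q (π i) - q (π j)) π ^ (2 * k)
      ≤ 𝔼 π, 4 ^ k * (linStat u (q (π i)) π ^ (2 * k) + linStat u (q (π j)) π ^ (2 * k)) :=
        expect_le_expect fun π _ => by rw [linStat_sub_right]; exact sub_pow_two_mul_le ..
    _ = 4 ^ k * (𝔼 π, linStat u (q (π i)) π ^ (2 * k) +
          𝔼 π, linStat u (q (π j)) π ^ (2 * k)) := by rw [← mul_expect, expect_add_distrib]
    _ ≤ 4 ^ k * (3 * (256 * k * (A * B) ^ 2 * Fintype.card ι) ^ k +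
          3 * (256 * k * (A * B) ^ 2 * Fintype.card ι) ^ k) := by
        gcongr <;> exact expect_linStat_apply_pow_two_mul_le hu hA hB k _
    _ = 6 * (4 * (256 * k * (A * B) ^ 2 * Fintype.card ι)) ^ k := by rw [mul_pow 4]; ring
    _ = _ := by ring

end RandomIndex

section QuadStat

/-- The second difference of the array `p` along the pair `(i, j)`. -/
def secondDiff {ι : Type*} (p : ι → ι → ℝ) (i j : ι) : ℝ := p i i - 2 * p i j + p j j

lemma abs_secondDiff_le {ι : Type*} {p : ι → ι → ℝ} {A : ℝ} (hA : ∀ i j, |p i j| ≤ A) (i j : ι) :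
    |secondDiff p i j| ≤ 4 * A := by
  simp only [abs_le] at hA
  rw [secondDiff, abs_le]
  constructor <;> linarith [hA i i, hA i j, hA j j]

variable {N : ℕ} {p q : Fin N → Fin N → ℝ}

/-- Apply the linear increment formula to one argument of the bilinear form at a time. -/
lemma swapDiff_gammaStat_eq_add (hp : ∀ i j, p i j = p j i) (hq : ∀ i j, q i j = q j i)
    (i j : Fin N) (π : Perm (Fin N)) :
    swapDiff (gammaStat N p q) i j π =
      linStat (p i - p j) (q (π i) - q (π j)) π +
        linStat (p i - p j) (q (π i) - q (π j)) (π * swap i j) := by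
  have hrow : ∑ l, swapDiff (linStat (p · l) (q · (π l))) i j π =
      linStat (p i - p j) (q (π i) - q (π j)) π := by
    simp [swapDiff_linStat, linStat]
  have hcol : ∑ l, swapDiff (linStat (p l) (q ((π * swap i j) l))) i j π =
      linStat (p i - p j) (q (π i) - q (π j)) (π * swap i j) := by
    simp only [swapDiff_linStat, linStat, Pi.sub_apply]
    exact sum_congr rfl fun l _ => by rw [hp l i, hp l j, hq _ (π i), hq _ (π j)]
  rw [← hrow, ← hcol]
  simp only [swapDiff, gammaStat, linStat, sum_sub_distrib]
  rw [sum_comm (f := fun l i => p i l * q (π i) (π l)),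
    sum_comm (f := fun l k => p k l * q ((π * swap i j) k) (π l))]
  ring

lemma swapDiff_gammaStat (hp : ∀ i j, p i j = p j i) (hq : ∀ i j, q i j = q j i)
    (i j : Fin N) (π : Perm (Fin N)) :
    swapDiff (gammaStat N p q) i j π =
      2 * linStat (p i - p j) (q (π i) - q (π j)) π -
        secondDiff p i j * secondDiff q (π i) (π j) := by
  have h := swapDiff_linStat (p i - p j) (q (π i) - q (π j)) i j π
  rw [swapDiff_gammaStat_eq_add hp hq, secondDiff, secondDiff]
  simp only [swapDiff, Pi.sub_apply, hp j i, hq (π j) (π i)] at h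
  linear_combination -h

lemma sum_sum_linStat_sub (hp : ∀ j, ∑ i, p i j = 0) (π : Perm (Fin N)) :
    ∑ i, ∑ j, linStat (p i - p j) (q (π i) - q (π j)) π = 2 * N * gammaStat N p q π := by
  calc ∑ i, ∑ j, linStat (p i - p j) (q (π i) - q (π j)) π
      = ∑ l, ∑ i, ∑ j, (p i l - p j l) * (q (π i) (π l) - q (π j) (π l)) := by
        simp only [linStat, Pi.sub_apply]
        rw [sum_comm_cycle]
    _ = ∑ l, 2 * N * ∑ i, p i l * q (π i) (π l) := by
        simp only [sum_sum_sub_mul_sub (hp _), Fintype.card_fin]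
    _ = _ := by rw [gammaStat, sum_comm, mul_sum]

lemma abs_secondDiff_mul_secondDiff_le {A B : ℝ} (hA : ∀ i j, |p i j| ≤ A)
    (hB : ∀ i j, |q i j| ≤ B) (i j i' j' : Fin N) :
    |secondDiff p i j * secondDiff q i' j'| ≤ 16 * (A * B) := by
  have hA₀ : 0 ≤ A := (abs_nonneg _).trans (hA i j)
  calc |secondDiff p i j * secondDiff q i' j'| ≤ 4 * A * (4 * B) := by
        rw [abs_mul]
        gcongr
        exacts [abs_secondDiff_le hA i j, abs_secondDiff_le hB i' j']
    _ = 16 * (A * B) := by ring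

variable [NeZero N] {A B : ℝ}

lemma expect_swapDiff_gammaStat_pow_two_mul_le (hp : ∀ i j, p i j = p j i)
    (hq : ∀ i j, q i j = q j i) (hp₀ : ∀ i, ∑ j, p i j = 0) (hA : ∀ i j, |p i j| ≤ A)
    (hB : ∀ i j, |q i j| ≤ B) (k : ℕ)
    (i j : Fin N) :
    𝔼 π, swapDiff (gammaStat N p q) i j π ^ (2 * k) ≤
      7 * (65536 * k * (A * B) ^ 2 * N) ^ k := by
  have hN : (1 : ℝ) ≤ N := Nat.one_le_cast.2 (NeZero.one_le)
  set X := fun π : Perm (Fin N) => linStat (p i - p j) (q (π i) - q (π j)) π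
  set T := 4096 * k * (A * B) ^ 2 * N with hT
  have hX : 𝔼 π, X π ^ (2 * k) ≤ 6 * T ^ k := by
    have hu₀ : ∑ l, (p i - p j) l = 0 := by simp [hp₀]
    have hu (l : Fin N) : |(p i - p j) l| ≤ 2 * A :=
      (abs_sub _ _).trans (by linarith [hA i l, hA j l])
    convert expect_linStat_sub_pow_two_mul_le hu₀ hu hB k i j using 3
    rw [hT, Fintype.card_fin]
    ring
  have hpt (π : Perm (Fin N)) : swapDiff (gammaStat N p q) i j π ^ (2 * k) ≤
      4 ^ k * (4 ^ k * X π ^ (2 * k) + (16 * (A * B)) ^ (2 * k)) := by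
    have hfour : 4 ^ k * X π ^ (2 * k) = (2 * X π) ^ (2 * k) := by
      rw [mul_pow, pow_mul 2]; norm_num
    rw [swapDiff_gammaStat hp hq, hfour]
    refine (sub_pow_two_mul_le _ _ k).trans ?_
    rw [← (even_two_mul k).pow_abs (secondDiff p i j * _)]
    gcongr
    exact abs_secondDiff_mul_secondDiff_le hA hB ..
  have hconst : (16 * (A * B)) ^ (2 * k) ≤ T ^ k := by
    obtain _ | k := k
    · simp
    rw [pow_mul]
    gcongr
    have hk : (1 : ℝ) ≤ (k + 1 : ℕ) := by simp
    nlinarith [mul_le_mul hk hN zero_le_one (by positivity), sq_nonneg (A * B)]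
  calc 𝔼 π, swapDiff (gammaStat N p q) i j π ^ (2 * k)
      ≤ 4 ^ k * (4 ^ k * 𝔼 π, X π ^ (2 * k) + (16 * (A * B)) ^ (2 * k)) := by
        refine (expect_le_expect fun π _ => hpt π).trans_eq ?_
        simp only [← mul_expect, expect_add_distrib, Fintype.expect_const]
    _ ≤ 4 ^ k * (4 ^ k * (6 * T ^ k) + 4 ^ k * T ^ k) := by
        gcongr
        exact hconst.trans (le_mul_of_one_le_left (by positivity) (one_le_pow₀ (by norm_num)))
    _ = 7 * (4 * (4 * T)) ^ k := by rw [mul_pow 4, mul_pow 4]; ring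
    _ = _ := by rw [hT]; ring

lemma expect_gammaStat_pow_two_mul_le (hp : ∀ i j, p i j = p j i) (hq : ∀ i j, q i j = q j i)
    (hp₀ : ∀ i, ∑ j, p i j = 0) (hA : ∀ i j, |p i j| ≤ A) (hB : ∀ i j, |q i j| ≤ B) (k : ℕ) :
    𝔼 π, gammaStat N p q π ^ (2 * k) ≤ 15 * (512 * k * (A * B) * N) ^ (2 * k) := by
  have hA₀ : 0 ≤ A := (abs_nonneg _).trans (hA 0 0)
  have hB₀ : 0 ≤ B := (abs_nonneg _).trans (hB 0 0)
  have hp₀' (j : Fin N) : ∑ i, p i j = 0 := by simpa only [hp _ j] using hp₀ j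
  have hreg (π : Perm (Fin N)) :
      |4 * Fintype.card (Fin N) * gammaStat N p q π - ∑ i, ∑ j, swapDiff (gammaStat N p q) i j π| ≤
        (Fintype.card (Fin N) : ℝ) ^ 2 * (16 * (A * B)) := by
    have hrem : 4 * N * gammaStat N p q π - ∑ i, ∑ j, swapDiff (gammaStat N p q) i j π =
        ∑ i, ∑ j, secondDiff p i j * secondDiff q (π i) (π j) := by
      simp only [swapDiff_gammaStat hp hq, sum_sub_distrib, ← mul_sum, sum_sum_linStat_sub hp₀']
      ring
    rw [Fintype.card_fin, hrem]
    calc _ ≤ ∑ i, ∑ j, |secondDiff p i j * secondDiff q (π i) (π j)| :=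
          (abs_sum_le_sum_abs _ _).trans (sum_le_sum fun i _ => abs_sum_le_sum_abs _ _)
      _ ≤ ∑ _i : Fin N, ∑ _j : Fin N, 16 * (A * B) :=
          sum_le_sum fun i _ => sum_le_sum fun j _ => abs_secondDiff_mul_secondDiff_le hA hB ..
      _ = _ := by simp; ring
  have h := expect_pow_two_mul_le (by norm_num) (by positivity) hreg
    (expect_swapDiff_gammaStat_pow_two_mul_le hp hq hp₀ hA hB k)
  obtain _ | k := k
  · simp
  rw [Fintype.card_fin] at h
  set n : ℝ := ((k + 1 : ℕ) : ℝ)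
  calc _ ≤ _ := h
    _ = 14 * (4 * n * N * (65536 * n * (A * B) ^ 2 * N)) ^ (k + 1) +
        ((4 ^ 2) ^ (k + 1) * (N * (16 * (A * B))) ^ (2 * (k + 1))) := by
      rw [mul_pow (4 * n * N), mul_pow (4 * n)]; norm_num; ring
    _ = 14 * (512 * n * (A * B) * N) ^ (2 * (k + 1)) +
        (64 * (A * B) * N) ^ (2 * (k + 1)) := by
      rw [← pow_mul 4, ← mul_pow, pow_mul (512 * n * _ * _)]; ring
    _ ≤ 14 * (512 * n * (A * B) * N) ^ (2 * (k + 1)) +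
        (512 * n * (A * B) * N) ^ (2 * (k + 1)) := by
      gcongr
      simp only [n]; push_cast; linarith
    _ = _ := by ring

end QuadStat

section OddMoments

variable {ι : Type*} [Fintype ι] [DecidableEq ι]

lemma expect_swapDiff_eq_zero (f : Perm ι → ℝ) (i j : ι) : 𝔼 π, swapDiff f i j π = 0 := by
  simp [swapDiff, expect_sub_distrib, expect_mul_right f]

lemma mul_expect_eq_zero {f : Perm ι → ℝ} {l : ℝ}
    (hreg : ∀ π, ∑ i, ∑ j, swapDiff f i j π = l * Fintype.card ι * f π) :
    l * Fintype.card ι * 𝔼 π, f π = 0 := by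
  simp only [mul_expect, ← hreg, expect_sum_comm, expect_swapDiff_eq_zero, sum_const_zero]

lemma abs_expect_swapDiff_mul_pow_sub_le {f : Perm ι → ℝ} {c : ℝ} {i j : ι}
    (hc : ∀ π, |swapDiff f i j π| ≤ c) (m : ℕ) :
    |𝔼 π, swapDiff f i j π * f π ^ (2 * m + 2) -
        (m + 1) * 𝔼 π, swapDiff f i j π ^ 2 * f π ^ (2 * m + 1)| ≤
      (2 * m + 2) ^ 2 * c ^ 3 * 𝔼 π, f π ^ (2 * m) := by
  set R : Perm ι → ℝ := fun π => f π ^ (2 * m + 2) - f (π * swap i j) ^ (2 * m + 2) -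
    (2 * m + 2) * swapDiff f i j π * f π ^ (2 * m + 1)
  have hR (π : Perm ι) : |swapDiff f i j π * R π / 2| ≤
      (2 * m + 2) ^ 2 * c ^ 3 / 2 * (f π ^ (2 * m) + f (π * swap i j) ^ (2 * m)) := by
    have htaylor : |R π| ≤ (2 * m + 2) ^ 2 * swapDiff f i j π ^ 2 *
        max |f π| |f (π * swap i j)| ^ (2 * m) := by
      have h := abs_pow_sub_pow_sub_le (f π) (f (π * swap i j)) (2 * m)
      push_cast at h
      exact h
    have hc₀ : 0 ≤ c := (abs_nonneg _).trans (hc π)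
    calc |swapDiff f i j π * R π / 2| = |swapDiff f i j π| * |R π| / 2 := by
          rw [abs_div, abs_mul, abs_two]
      _ ≤ c * ((2 * m + 2) ^ 2 * c ^ 2 * (f π ^ (2 * m) + f (π * swap i j) ^ (2 * m))) / 2 := by
          gcongr
          · exact hc π
          · refine htaylor.trans ?_
            rw [← sq_abs (swapDiff f i j π)]
            gcongr
            exacts [hc π, max_abs_pow_le_add _ _ m]
      _ = _ := by ring
  have hsplit : 𝔼 π, swapDiff f i j π * f π ^ (2 * m + 2) -
        (m + 1) * 𝔼 π, swapDiff f i j π ^ 2 * f π ^ (2 * m + 1) =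
      𝔼 π, swapDiff f i j π * R π / 2 := by
    rw [expect_swapDiff_mul f (fun π => f π ^ (2 * m + 2)) i j, expect_div, mul_expect,
      ← expect_sub_distrib]
    refine expect_congr rfl fun π _ => ?_
    simp only [R, swapDiff]
    ring
  calc _ ≤ 𝔼 π, |swapDiff f i j π * R π / 2| := by rw [hsplit]; exact abs_expect_le _ _
    _ ≤ 𝔼 π, (2 * m + 2) ^ 2 * c ^ 3 / 2 * (f π ^ (2 * m) + f (π * swap i j) ^ (2 * m)) :=
        expect_le_expect fun π _ => hR π
    _ = _ := by
        rw [← mul_expect, expect_add_distrib, expect_mul_right fun π => f π ^ (2 * m)]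
        ring

lemma abs_mul_expect_pow_sub_le {f : Perm ι → ℝ} {l c : ℝ}
    (hreg : ∀ π, ∑ i, ∑ j, swapDiff f i j π = l * Fintype.card ι * f π)
    (hc : ∀ i j π, |swapDiff f i j π| ≤ c) (m : ℕ) :
    |l * Fintype.card ι * 𝔼 π, f π ^ (2 * (m + 1) + 1) -
        (m + 1) * 𝔼 π, (∑ i, ∑ j, swapDiff f i j π ^ 2) * f π ^ (2 * m + 1)| ≤
      (2 * m + 2) ^ 2 * c ^ 3 * (Fintype.card ι : ℝ) ^ 2 * 𝔼 π, f π ^ (2 * m) := by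
  have hfirst : l * Fintype.card ι * 𝔼 π, f π ^ (2 * (m + 1) + 1) =
      ∑ i, ∑ j, 𝔼 π, swapDiff f i j π * f π ^ (2 * m + 2) := by
    simp only [← expect_sum_comm, ← sum_mul, hreg, mul_expect]
    exact expect_congr rfl fun π _ => by ring
  have hsecond : 𝔼 π, (∑ i, ∑ j, swapDiff f i j π ^ 2) * f π ^ (2 * m + 1) =
      ∑ i, ∑ j, 𝔼 π, swapDiff f i j π ^ 2 * f π ^ (2 * m + 1) := by
    simp only [← expect_sum_comm, ← sum_mul]
  rw [hfirst, hsecond]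
  simp only [mul_sum, ← sum_sub_distrib]
  calc _ ≤ ∑ i, ∑ j, |𝔼 π, swapDiff f i j π * f π ^ (2 * m + 2) -
          (m + 1) * 𝔼 π, swapDiff f i j π ^ 2 * f π ^ (2 * m + 1)| :=
        (abs_sum_le_sum_abs _ _).trans (sum_le_sum fun i _ => abs_sum_le_sum_abs _ _)
    _ ≤ ∑ _i : ι, ∑ _j : ι, (2 * m + 2) ^ 2 * c ^ 3 * 𝔼 π, f π ^ (2 * m) :=
        sum_le_sum fun i _ => sum_le_sum fun j _ => abs_expect_swapDiff_mul_pow_sub_le (hc i j) m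
    _ = _ := by simp; ring

end OddMoments

section Asymptotic

lemma isBigO_natCast_pow_of_le {f : ℕ → ℝ} {C : ℝ} {k : ℕ} (hf : ∀ N, 0 ≤ f N)
    (hle : ∀ N, N ≠ 0 → f N ≤ C * (N : ℝ) ^ k) : f =O[atTop] fun N => (N : ℝ) ^ k := by
  refine .of_bound C ((eventually_ne_atTop 0).mono fun N hN => ?_)
  rw [Real.norm_of_nonneg (hf N), Real.norm_of_nonneg (by positivity)]
  exact hle N hN

lemma isBigO_natCast_pow_pow {i j : ℕ} (h : i ≤ j) :
    (fun N : ℕ => (N : ℝ) ^ i) =O[atTop] fun N : ℕ => (N : ℝ) ^ j :=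
  isBigO_natCast_pow_of_le (C := 1) (fun N => by positivity) fun N hN => by
    rw [one_mul]
    exact pow_le_pow_right₀ (Nat.one_le_cast.2 (Nat.one_le_iff_ne_zero.2 hN)) h

lemma isBigO_natCast_pow_of_mul {g : ℕ → ℝ} {k : ℕ}
    (h : (fun N : ℕ => (N : ℝ) * g N) =O[atTop] fun N : ℕ => (N : ℝ) ^ (k + 1)) :
    g =O[atTop] fun N => (N : ℝ) ^ k := by
  obtain ⟨C, hC⟩ := h.bound
  refine .of_bound C ?_
  filter_upwards [hC, eventually_gt_atTop 0] with N hN hpos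
  have hpos' : 0 < ‖(N : ℝ)‖ := norm_pos_iff.2 (Nat.cast_ne_zero.2 hpos.ne')
  rw [norm_mul, pow_succ', norm_mul, mul_left_comm] at hN
  exact le_of_mul_le_mul_left hN hpos'

lemma isBigO_expect_mul {X Y : (N : ℕ) → Perm (Fin N) → ℝ} {i j k : ℕ} (hk : i + j = 2 * k)
    (hX : (fun N => 𝔼 π, X N π ^ 2) =O[atTop] fun N => (N : ℝ) ^ i)
    (hY : (fun N => 𝔼 π, Y N π ^ 2) =O[atTop] fun N => (N : ℝ) ^ j) :
    (fun N => 𝔼 π, X N π * Y N π) =O[atTop] fun N => (N : ℝ) ^ k := by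
  refine IsBigO.of_pow two_ne_zero ?_
  calc ((fun N => 𝔼 π, X N π * Y N π) ^ 2 : ℕ → ℝ)
      =O[atTop] fun N => (𝔼 π, X N π ^ 2) * 𝔼 π, Y N π ^ 2 := by
        refine isBigO_of_le _ fun N => ?_
        rw [Pi.pow_apply, Real.norm_of_nonneg (sq_nonneg _)]
        exact (expect_mul_sq_le_sq_mul_sq ..).trans (le_abs_self _)
    _ =O[atTop] fun N => (N : ℝ) ^ i * (N : ℝ) ^ j := hX.mul hY
    _ = (fun N : ℕ => (N : ℝ) ^ k) ^ 2 := by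
        ext N; simp [← pow_add, ← pow_mul, hk, mul_comm k]

lemma isBigO_expect_mul_of_sub {V X : (N : ℕ) → Perm (Fin N) → ℝ} {v : ℕ → ℝ} {k : ℕ}
    (hv : v =O[atTop] fun N => (N : ℝ) ^ 2)
    (hV : (fun N => 𝔼 π, (V N π - v N) ^ 2) =O[atTop] fun N => (N : ℝ) ^ 3)
    (hX : (fun N => 𝔼 π, X N π) =O[atTop] fun N => (N : ℝ) ^ k)
    (hX' : (fun N => 𝔼 π, X N π ^ 2) =O[atTop] fun N => (N : ℝ) ^ (2 * k + 1)) :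
    (fun N => 𝔼 π, V N π * X N π) =O[atTop] fun N => (N : ℝ) ^ (k + 2) := by
  have hlead := hv.mul hX
  simp only [← pow_add, add_comm 2 k] at hlead
  refine ((isBigO_expect_mul (by ring) hV hX').add hlead).congr_left fun N => ?_
  rw [mul_expect, ← expect_add_distrib]
  exact expect_congr rfl fun π _ => by ring

variable {f : (N : ℕ) → Perm (Fin N) → ℝ} {l c : ℝ}

lemma isBigO_expect_pow_two_mul (hl : 1 ≤ l)
    (hreg : ∀ N π, ∑ i, ∑ j, swapDiff (f N) i j π = l * N * f N π)
    (hc : ∀ N i j π, |swapDiff (f N) i j π| ≤ c) (k : ℕ) :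
    (fun N => 𝔼 π, f N π ^ (2 * k)) =O[atTop] fun N => (N : ℝ) ^ k := by
  refine isBigO_natCast_pow_of_le (C := 2 * (4 * k) ^ k * c ^ (2 * k) + 16 ^ k)
    (fun N => expect_nonneg fun π _ => (even_two_mul k).pow_nonneg _) fun N hN => ?_
  have : NeZero N := ⟨hN⟩
  have hN' : (1 : ℝ) ≤ N := Nat.one_le_cast.2 NeZero.one_le
  have hM (i j : Fin N) : 𝔼 π, swapDiff (f N) i j π ^ (2 * k) ≤ c ^ (2 * k) :=
    expect_le univ_nonempty fun π _ => by
      rw [← (even_two_mul k).pow_abs]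
      exact pow_le_pow_left₀ (abs_nonneg _) (hc N i j π) _
  calc _ ≤ _ := expect_pow_two_mul_le hl le_rfl (fun π => by simp [hreg]) hM
    _ ≤ 2 * (4 * k) ^ k * (N : ℝ) ^ k * c ^ (2 * k) + 16 ^ k * 1 := by
        rw [Fintype.card_fin, mul_zero]
        gcongr
        exact pow_le_one₀ le_rfl zero_le_one
    _ ≤ 2 * (4 * k) ^ k * (N : ℝ) ^ k * c ^ (2 * k) + 16 ^ k * (N : ℝ) ^ k := by
        gcongr
        exact one_le_pow₀ hN'
    _ = _ := by ring

lemma isBigO_expect_odd_pow (hl : 1 ≤ l)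
    (hreg : ∀ N π, ∑ i, ∑ j, swapDiff (f N) i j π = l * N * f N π)
    (hc : ∀ N i j π, |swapDiff (f N) i j π| ≤ c) {v : ℕ → ℝ}
    (hv : v =O[atTop] fun N => (N : ℝ) ^ 2)
    (hV : (fun N => 𝔼 π, (∑ i, ∑ j, swapDiff (f N) i j π ^ 2 - v N) ^ 2) =O[atTop]
      fun N => (N : ℝ) ^ 3) (m : ℕ) :
    (fun N => 𝔼 π, f N π ^ (2 * m + 1)) =O[atTop] fun N => (N : ℝ) ^ m := by
  have heven := isBigO_expect_pow_two_mul hl hreg hc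
  have hl₀ : l ≠ 0 := by positivity
  have hreg' (N : ℕ) (π : Perm (Fin N)) : ∑ i, ∑ j, swapDiff (f N) i j π =
      l * Fintype.card (Fin N) * f N π := by rw [hreg, Fintype.card_fin]
  induction m with
  | zero =>
    refine isBigO_natCast_pow_of_mul (.of_norm_le fun N : ℕ => ?_)
    have hmean := mul_expect_eq_zero (hreg' N)
    rw [Fintype.card_fin, mul_assoc] at hmean
    simp [(mul_eq_zero.1 hmean).resolve_left hl₀]
  | succ m ih =>
    set V : (N : ℕ) → Perm (Fin N) → ℝ := fun N π => ∑ i, ∑ j, swapDiff (f N) i j π ^ 2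
    have hmain : (fun N => 𝔼 π, V N π * f N π ^ (2 * m + 1)) =O[atTop]
        fun N => (N : ℝ) ^ (m + 2) :=
      isBigO_expect_mul_of_sub hv hV ih
        (by simpa only [← pow_mul, mul_comm _ 2] using heven (2 * m + 1))
    have herr : (fun N => l * N * 𝔼 π, f N π ^ (2 * (m + 1) + 1) -
        (m + 1) * 𝔼 π, V N π * f N π ^ (2 * m + 1)) =O[atTop] fun N => (N : ℝ) ^ (m + 2) := by
      have hpow := ((isBigO_refl (fun N : ℕ => (N : ℝ) ^ 2) atTop).mul (heven m)).const_mul_left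
        ((2 * m + 2) ^ 2 * c ^ 3)
      simp only [← pow_add, add_comm 2 m] at hpow
      refine .trans (.of_norm_le fun N => ?_) hpow
      simpa only [V, Fintype.card_fin, mul_assoc, Real.norm_eq_abs] using
        abs_mul_expect_pow_sub_le (hreg' N) (hc N) m
    have hsum : (fun N : ℕ => l * (N * 𝔼 π, f N π ^ (2 * (m + 1) + 1))) =O[atTop]
        fun N : ℕ => (N : ℝ) ^ (m + 2) :=
      (herr.add (hmain.const_mul_left (m + 1))).congr_left fun N => by ring
    exact isBigO_natCast_pow_of_mul ((isBigO_const_mul_left_iff hl₀).1 hsum)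

end Asymptotic

section LinStatMoments

lemma abs_balance_le {ι : Type*} [Fintype ι] {f : ι → ℝ} {A : ℝ} (hA : ∀ i, |f i| ≤ A) (i : ι) :
    |Fintype.balance f i| ≤ 2 * A := by
  have hmean : |𝔼 j, f j| ≤ A :=
    (abs_expect_le _ _).trans (expect_le ⟨i, mem_univ i⟩ fun j _ => hA j)
  rw [Fintype.balance_apply]
  linarith [abs_sub (f i) (𝔼 j, f j), hA i]

lemma linStat_balance_left {ι : Type*} [Fintype ι] (α β : ι → ℝ) (π : Perm ι) :
    linStat (Fintype.balance α) β π = linStat α β π - (𝔼 i, α i) * ∑ i, β i := by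
  simp only [linStat, Fintype.balance_apply, sub_mul, sum_sub_distrib, ← mul_sum,
    Equiv.sum_comp π β]

lemma sum_sum_sub_mul_sub_sq {ι : Type*} [Fintype ι] {g h : ι → ℝ} (hg : ∑ i, g i = 0)
    (hh : ∑ i, h i = 0) :
    ∑ i, ∑ j, ((g i - g j) * (h i - h j)) ^ 2 =
      2 * Fintype.card ι * ∑ i, g i ^ 2 * h i ^ 2 + 2 * ((∑ i, g i ^ 2) * ∑ i, h i ^ 2) +
        4 * (∑ i, g i * h i) ^ 2 := by
  have hexpand (i j : ι) : ((g i - g j) * (h i - h j)) ^ 2 =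
      g i ^ 2 * h i ^ 2 + g j ^ 2 * h j ^ 2 + g i ^ 2 * h j ^ 2 + h i ^ 2 * g j ^ 2 +
        4 * (g i * h i) * (g j * h j) - 2 * (g i ^ 2 * h i) * h j - 2 * h i * (g j ^ 2 * h j) -
        2 * (g i * h i ^ 2) * g j - 2 * g i * (g j * h j ^ 2) := by
    ring
  simp only [hexpand, sum_add_distrib, sum_sub_distrib, sum_const, card_univ, nsmul_eq_mul]
  simp only [← mul_sum, ← sum_mul, hg, hh]
  ring

lemma sum_sum_swapDiff_linStat_sq {ι : Type*} [Fintype ι] [DecidableEq ι] {α β : ι → ℝ}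
    (hα : ∑ i, α i = 0) (hβ : ∑ i, β i = 0) (π : Perm ι) :
    ∑ i, ∑ j, swapDiff (linStat α β) i j π ^ 2 =
      4 * ((∑ i, α i ^ 2) * ∑ i, β i ^ 2) +
        (2 * Fintype.card ι * linStat (Fintype.balance (α ^ 2)) (β ^ 2) π +
          4 * linStat α β π ^ 2) := by
  have hmean : Fintype.card ι * 𝔼 i, (α ^ 2) i = ∑ i, α i ^ 2 := Fintype.card_mul_expect _
  have hβπ : ∑ i, β (π i) = 0 := (Equiv.sum_comp π β).trans hβ
  have hβsq : ∑ i, β (π i) ^ 2 = ∑ i, β i ^ 2 := Equiv.sum_comp π fun i => β i ^ 2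
  simp only [swapDiff_linStat, sum_sum_sub_mul_sub_sq hα hβπ, linStat_balance_left, hβsq]
  simp only [linStat, Pi.pow_apply] at hmean ⊢
  linear_combination (2 * ∑ i, β i ^ 2) * hmean

variable {α β : (N : ℕ) → Fin N → ℝ} {A B : ℝ}

lemma isBigO_expect_linStat_pow_two_mul (hα : ∀ N, ∑ i, α N i = 0) (hA : ∀ N i, |α N i| ≤ A)
    (hB : ∀ N i, |β N i| ≤ B) (k : ℕ) :
    (fun N => 𝔼 π, linStat (α N) (β N) π ^ (2 * k)) =O[atTop] fun N => (N : ℝ) ^ k :=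
  isBigO_expect_pow_two_mul one_le_two
    (fun N π => by rw [sum_sum_swapDiff_linStat (hα N), Fintype.card_fin])
    (fun N => abs_swapDiff_linStat_le (hA N) (hB N)) k

lemma isBigO_sum_sq_mul_sum_sq (hA : ∀ N i, |α N i| ≤ A) (hB : ∀ N i, |β N i| ≤ B) :
    (fun N => 4 * ((∑ i, α N i ^ 2) * ∑ i, β N i ^ 2)) =O[atTop] fun N => (N : ℝ) ^ 2 := by
  have hsum {γ : (N : ℕ) → Fin N → ℝ} {C : ℝ} (hC : ∀ N i, |γ N i| ≤ C) (N : ℕ) :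
      ∑ i, γ N i ^ 2 ≤ N * C ^ 2 := by
    simpa using sum_le_card_nsmul univ _ _ fun i _ => sq_le_sq' (abs_le.1 (hC N i)).1
      (abs_le.1 (hC N i)).2
  refine isBigO_natCast_pow_of_le (C := 4 * (A ^ 2 * B ^ 2)) (fun N => by positivity)
    fun N _ => ?_
  calc 4 * ((∑ i, α N i ^ 2) * ∑ i, β N i ^ 2) ≤ 4 * (N * A ^ 2 * (N * B ^ 2)) := by
        gcongr
        exacts [hsum hA N, hsum hB N]
    _ = _ := by ring

lemma isBigO_expect_sum_sum_swapDiff_linStat_sq_sub (hα : ∀ N, ∑ i, α N i = 0)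
    (hβ : ∀ N, ∑ i, β N i = 0) (hA : ∀ N i, |α N i| ≤ A) (hB : ∀ N i, |β N i| ≤ B) :
    (fun N => 𝔼 π, (∑ i, ∑ j, swapDiff (linStat (α N) (β N)) i j π ^ 2 -
        4 * ((∑ i, α N i ^ 2) * ∑ i, β N i ^ 2)) ^ 2) =O[atTop] fun N => (N : ℝ) ^ 3 := by
  set W : (N : ℕ) → Perm (Fin N) → ℝ := fun N => linStat (Fintype.balance (α N ^ 2)) (β N ^ 2)
  have hsq {x C : ℝ} (h : |x| ≤ C) : |x ^ 2| ≤ C ^ 2 := by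
    rw [abs_pow]
    gcongr
  have hW : (fun N => 𝔼 π, W N π ^ 2) =O[atTop] fun N => (N : ℝ) ^ 1 :=
    isBigO_expect_linStat_pow_two_mul (fun N => Fintype.sum_balance _)
      (fun N => abs_balance_le fun i => hsq (hA N i)) (fun N i => hsq (hB N i)) 1
  have hNW : (fun N => 16 * (N ^ 2 * 𝔼 π, W N π ^ 2)) =O[atTop] fun N => (N : ℝ) ^ 3 := by
    have h := (isBigO_refl (fun N : ℕ => (N : ℝ) ^ 2) atTop).mul hW
    simp only [← pow_add] at h
    exact h.const_mul_left 16
  have hL : (fun N => 64 * 𝔼 π, linStat (α N) (β N) π ^ 4) =O[atTop] fun N => (N : ℝ) ^ 3 :=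
    ((isBigO_expect_linStat_pow_two_mul hα hA hB 2).trans
      (isBigO_natCast_pow_pow (by norm_num))).const_mul_left 64
  refine .trans (isBigO_of_le _ fun N => ?_) (hNW.add hL)
  have hbound : 𝔼 π, (2 * N * W N π + 4 * linStat (α N) (β N) π ^ 2) ^ 2 ≤
      16 * (N ^ 2 * 𝔼 π, W N π ^ 2) + 64 * 𝔼 π, linStat (α N) (β N) π ^ 4 := by
    simp only [mul_expect, ← expect_add_distrib]
    exact expect_le_expect fun π _ => (add_pow_two_mul_le _ _ 1).trans_eq (by ring)
  rw [Real.norm_of_nonneg (expect_nonneg fun π _ => sq_nonneg _)]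
  simp only [sum_sum_swapDiff_linStat_sq (hα N) (hβ N), Fintype.card_fin, add_sub_cancel_left]
  exact hbound.trans (le_abs_self _)

lemma isBigO_expect_linStat_odd_pow (hα : ∀ N, ∑ i, α N i = 0) (hβ : ∀ N, ∑ i, β N i = 0)
    (hA : ∀ N i, |α N i| ≤ A) (hB : ∀ N i, |β N i| ≤ B) (m : ℕ) :
    (fun N => 𝔼 π, linStat (α N) (β N) π ^ (2 * m + 1)) =O[atTop] fun N => (N : ℝ) ^ m :=
  isBigO_expect_odd_pow one_le_two
    (fun N π => by rw [sum_sum_swapDiff_linStat (hα N), Fintype.card_fin])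
    (fun N => abs_swapDiff_linStat_le (hA N) (hB N)) (isBigO_sum_sq_mul_sum_sq hA hB)
    (isBigO_expect_sum_sum_swapDiff_linStat_sq_sub hα hβ hA hB) m

end LinStatMoments

section HoeffdingDecomposition

variable {ι : Type*} [Fintype ι] {a : ι → ι → ℝ} {A : ℝ}

/-- The row averages of an array, which drive the linear part of its correlation coefficient. -/
noncomputable def rowMean (a : ι → ι → ℝ) (i : ι) : ℝ := 𝔼 j, a i j

/-- The double centering of an array, which drives the degenerate part of its correlation
coefficient. The usual grand mean term is omitted: only symmetric arrays with total sum zero are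
centered. -/
noncomputable def doubleCenter (a : ι → ι → ℝ) (i j : ι) : ℝ := a i j - rowMean a i - rowMean a j

lemma card_mul_rowMean (a : ι → ι → ℝ) (i : ι) :
    Fintype.card ι * rowMean a i = ∑ j, a i j :=
  Fintype.card_mul_expect _

lemma sum_rowMean (h₀ : ∑ i, ∑ j, a i j = 0) : ∑ i, rowMean a i = 0 := by
  simp only [rowMean, Fintype.expect_eq_sum_div_card, ← sum_div, h₀, zero_div]

lemma abs_rowMean_le (hA : ∀ i j, |a i j| ≤ A) (i : ι) : |rowMean a i| ≤ A :=
  (abs_expect_le _ _).trans (expect_le ⟨i, mem_univ i⟩ fun j _ => hA i j)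

lemma abs_doubleCenter_le (hA : ∀ i j, |a i j| ≤ A) (i j : ι) : |doubleCenter a i j| ≤ 3 * A := by
  rw [doubleCenter]
  linarith [abs_sub (a i j - rowMean a i) (rowMean a j), abs_sub (a i j) (rowMean a i), hA i j,
    abs_rowMean_le hA i, abs_rowMean_le hA j]

lemma doubleCenter_comm (hsymm : ∀ i j, a i j = a j i) (i j : ι) :
    doubleCenter a i j = doubleCenter a j i := by
  rw [doubleCenter, doubleCenter, hsymm i j, sub_right_comm]

lemma sum_doubleCenter (h₀ : ∑ i, ∑ j, a i j = 0) (i : ι) : ∑ j, doubleCenter a i j = 0 := by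
  simp [doubleCenter, sum_rowMean h₀, card_mul_rowMean]

lemma sum_sum_add_add_mul_add_add {p q : ι → ι → ℝ} {α β : ι → ℝ} (hp : ∀ i j, p i j = p j i)
    (hq : ∀ i j, q i j = q j i) (hp₀ : ∀ i, ∑ j, p i j = 0) (hq₀ : ∀ i, ∑ j, q i j = 0)
    (hα : ∑ i, α i = 0) (hβ : ∑ i, β i = 0) :
    ∑ i, ∑ j, (p i j + α i + α j) * (q i j + β i + β j) =
      2 * Fintype.card ι * ∑ i, α i * β i + ∑ i, ∑ j, p i j * q i j := by
  have hcross {r : ι → ι → ℝ} (hr : ∀ i j, r i j = r j i) (hr₀ : ∀ i, ∑ j, r i j = 0)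
      (γ : ι → ℝ) : ∑ i, ∑ j, r i j * γ j = 0 := by
    rw [sum_comm]
    simp only [← sum_mul, hr _, hr₀, zero_mul, sum_const_zero]
  have hexpand (i j : ι) : (p i j + α i + α j) * (q i j + β i + β j) =
      p i j * q i j + β i * p i j + p i j * β j + α i * q i j + α i * β i + α i * β j +
        q i j * α j + β i * α j + α j * β j := by
    ring
  simp only [hexpand, sum_add_distrib, hcross hp hp₀, hcross hq hq₀, sum_const, card_univ,
    nsmul_eq_mul]
  simp only [← mul_sum, hp₀, hq₀, hα, hβ]
  simp only [mul_zero, sum_const_zero]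
  ring

variable {N : ℕ} {a b : Fin N → Fin N → ℝ}

lemma gammaStat_eq_linStat_add_gammaStat (ha : ∀ i j, a i j = a j i) (hb : ∀ i j, b i j = b j i)
    (ha₀ : ∑ i, ∑ j, a i j = 0) (hb₀ : ∑ i, ∑ j, b i j = 0) (π : Perm (Fin N)) :
    gammaStat N a b π = 2 * N * linStat (rowMean a) (rowMean b) π +
      gammaStat N (doubleCenter a) (doubleCenter b) π := by
  have h := sum_sum_add_add_mul_add_add (doubleCenter_comm ha)
    (fun i j => doubleCenter_comm hb (π i) (π j)) (sum_doubleCenter ha₀)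
    (fun i => (Equiv.sum_comp π _).trans (sum_doubleCenter hb₀ (π i))) (sum_rowMean ha₀)
    ((Equiv.sum_comp π _).trans (sum_rowMean hb₀))
  rw [Fintype.card_fin] at h
  rw [gammaStat, linStat, gammaStat, ← h]
  exact sum_congr rfl fun i _ => sum_congr rfl fun j _ => by simp only [doubleCenter]; ring

lemma gammaStat_symmetrize_sub (hb : ∀ i j, b i j = b j i) (hb₀ : ∑ i, ∑ j, b i j = 0)
    (a : Fin N → Fin N → ℝ) (c : ℝ) (π : Perm (Fin N)) :
    gammaStat N (fun i j => (a i j + a j i) / 2 - c) b π = gammaStat N a b π := by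
  have htranspose : ∑ i, ∑ j, a j i * b (π i) (π j) = gammaStat N a b π := by
    rw [gammaStat, sum_comm]
    exact sum_congr rfl fun i _ => sum_congr rfl fun j _ => by rw [hb]
  have hconst : ∑ i, ∑ j, b (π i) (π j) = 0 := by
    have hrow (i : Fin N) : ∑ j, b (π i) (π j) = ∑ j, b (π i) j := Equiv.sum_comp π _
    simp only [hrow]
    exact (Equiv.sum_comp π fun i => ∑ j, b i j).trans hb₀
  calc _ = (gammaStat N a b π + ∑ i, ∑ j, a j i * b (π i) (π j)) / 2 -
        c * ∑ i, ∑ j, b (π i) (π j) := by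
        simp only [gammaStat, sub_mul, div_mul_eq_mul_div, add_mul, sum_sub_distrib, mul_sum,
          ← sum_div, sum_add_distrib]
    _ = _ := by rw [htranspose, hconst]; ring

end HoeffdingDecomposition

section BoundedArrays

lemma isBigO_expect_natCast_mul_pow {X : (N : ℕ) → Perm (Fin N) → ℝ} {j k : ℕ}
    (hX : (fun N => 𝔼 π, X N π ^ k) =O[atTop] fun N => (N : ℝ) ^ j) (c : ℝ) :
    (fun N => 𝔼 π, (c * N * X N π) ^ k) =O[atTop] fun N => (N : ℝ) ^ (k + j) := by
  have h := ((isBigO_refl (fun N : ℕ => (N : ℝ) ^ k) atTop).mul hX).const_mul_left (c ^ k)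
  simp only [← pow_add] at h
  refine h.congr_left fun N => ?_
  simp only [mul_pow, ← mul_expect, mul_assoc]

lemma isBigO_expect_add_odd_pow {X Y : (N : ℕ) → Perm (Fin N) → ℝ} {m : ℕ}
    (hX : (fun N => 𝔼 π, X N π ^ (2 * m + 1)) =O[atTop] fun N => (N : ℝ) ^ (3 * m + 1))
    (hX' : (fun N => 𝔼 π, X N π ^ (4 * m)) =O[atTop] fun N => (N : ℝ) ^ (6 * m))
    (hY : ∀ k, (fun N => 𝔼 π, Y N π ^ (2 * k)) =O[atTop] fun N => (N : ℝ) ^ (2 * k)) :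
    (fun N => 𝔼 π, (X N π + Y N π) ^ (2 * m + 1)) =O[atTop] fun N => (N : ℝ) ^ (3 * m + 1) := by
  have hY₁ : (fun N => 𝔼 π, |Y N π| ^ 2) =O[atTop] fun N => (N : ℝ) ^ 2 := by
    simpa only [sq_abs] using hY 1
  have hsq (x : ℝ) : (x ^ (2 * m)) ^ 2 = x ^ (4 * m) := by ring
  have hYX : (fun N => 𝔼 π, |Y N π| * X N π ^ (2 * m)) =O[atTop]
      fun N => (N : ℝ) ^ (3 * m + 1) :=
    isBigO_expect_mul (j := 6 * m) (by ring) hY₁ (by simpa only [hsq] using hX')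
  have hYY : (fun N => 𝔼 π, |Y N π| * Y N π ^ (2 * m)) =O[atTop]
      fun N => (N : ℝ) ^ (3 * m + 1) := by
    refine (isBigO_expect_mul (j := 4 * m) (k := 2 * m + 1) (by ring) hY₁ ?_).trans
      (isBigO_natCast_pow_pow (by lia))
    simpa only [hsq, show 2 * (2 * m) = 4 * m by ring] using hY (2 * m)
  have hdiff : (fun N => 𝔼 π, (X N π + Y N π) ^ (2 * m + 1) - 𝔼 π, X N π ^ (2 * m + 1)) =O[atTop]
      fun N => (N : ℝ) ^ (3 * m + 1) := by
    refine .trans (.of_norm_le fun N => ?_)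
      ((hYX.add hYY).const_mul_left ((2 * m + 1) * (4 ^ m + 1)))
    rw [← expect_sub_distrib, ← expect_add_distrib, mul_expect]
    refine (abs_expect_le _ _).trans (expect_le_expect fun π _ => ?_)
    rw [← mul_add]
    exact abs_add_pow_sub_pow_le _ _ m
  simpa only [sub_add_cancel] using hdiff.add hX

variable {a b : (N : ℕ) → Fin N → Fin N → ℝ} {A B : ℝ}

lemma isBigO_expect_gammaStat_pow_two_mul {p q : (N : ℕ) → Fin N → Fin N → ℝ}
    (hp : ∀ N i j, p N i j = p N j i) (hq : ∀ N i j, q N i j = q N j i)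
    (hp₀ : ∀ N i, ∑ j, p N i j = 0) (hA : ∀ N i j, |p N i j| ≤ A) (hB : ∀ N i j, |q N i j| ≤ B)
    (k : ℕ) :
    (fun N => 𝔼 π, gammaStat N (p N) (q N) π ^ (2 * k)) =O[atTop] fun N => (N : ℝ) ^ (2 * k) := by
  refine isBigO_natCast_pow_of_le (C := 15 * (512 * k * (A * B)) ^ (2 * k))
    (fun N => expect_nonneg fun π _ => (even_two_mul k).pow_nonneg _) fun N hN => ?_
  have : NeZero N := ⟨hN⟩
  rw [mul_assoc, ← mul_pow]
  exact expect_gammaStat_pow_two_mul_le (hp N) (hq N) (hp₀ N) (hA N) (hB N) k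

lemma isBigO_expect_gammaStat_odd_pow_of_symm (ha : ∀ N i j, a N i j = a N j i)
    (hb : ∀ N i j, b N i j = b N j i) (ha₀ : ∀ N, ∑ i, ∑ j, a N i j = 0)
    (hb₀ : ∀ N, ∑ i, ∑ j, b N i j = 0) (hA : ∀ N i j, |a N i j| ≤ A)
    (hB : ∀ N i j, |b N i j| ≤ B) (m : ℕ) :
    (fun N => 𝔼 π, gammaStat N (a N) (b N) π ^ (2 * m + 1)) =O[atTop]
      fun N => (N : ℝ) ^ (3 * m + 1) := by
  simp only [fun N => gammaStat_eq_linStat_add_gammaStat (ha N) (hb N) (ha₀ N) (hb₀ N)]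
  have hα (N : ℕ) := sum_rowMean (ha₀ N)
  have hβ (N : ℕ) := sum_rowMean (hb₀ N)
  have hA' (N : ℕ) := abs_rowMean_le (hA N)
  have hB' (N : ℕ) := abs_rowMean_le (hB N)
  refine isBigO_expect_add_odd_pow ?_ ?_ fun k =>
    isBigO_expect_gammaStat_pow_two_mul (fun N => doubleCenter_comm (ha N))
      (fun N => doubleCenter_comm (hb N)) (fun N => sum_doubleCenter (ha₀ N))
      (fun N => abs_doubleCenter_le (hA N)) (fun N => abs_doubleCenter_le (hB N)) k
  · have h := isBigO_expect_natCast_mul_pow (isBigO_expect_linStat_odd_pow hα hβ hA' hB' m) 2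
    rwa [show 2 * m + 1 + m = 3 * m + 1 by ring] at h
  · have h := isBigO_expect_natCast_mul_pow
      (isBigO_expect_linStat_pow_two_mul hα hA' hB' (2 * m)) 2
    rwa [show 2 * (2 * m) = 4 * m by ring, show 4 * m + 2 * m = 6 * m by ring] at h

lemma isBigO_expect_gammaStat_odd_pow (hb : ∀ N i j, b N i j = b N j i)
    (hb₀ : ∀ N, ∑ i, ∑ j, b N i j = 0) (hA : ∀ N i j, |a N i j| ≤ A)
    (hB : ∀ N i j, |b N i j| ≤ B) (m : ℕ) :
    (fun N => 𝔼 π, gammaStat N (a N) (b N) π ^ (2 * m + 1)) =O[atTop]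
      fun N => (N : ℝ) ^ (3 * m + 1) := by
  set c : ℕ → ℝ := fun N => 𝔼 i, rowMean (a N) i
  set s : (N : ℕ) → Fin N → Fin N → ℝ := fun N i j => (a N i j + a N j i) / 2 - c N
  have hs₀ (N : ℕ) : ∑ i, ∑ j, s N i j = 0 := by
    have hrow (i : Fin N) : N * rowMean (a N) i = ∑ j, a N i j := by
      simpa using card_mul_rowMean (a N) i
    have hc : N * (N * c N) = ∑ i, ∑ j, a N i j := by
      have hmean : N * c N = ∑ i, rowMean (a N) i := by
        simpa using Fintype.card_mul_expect (rowMean (a N))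
      simp only [hmean, mul_sum, hrow]
    have hcomm : ∑ i, ∑ j, a N j i = ∑ i, ∑ j, a N i j := sum_comm
    simp only [s, sum_sub_distrib, ← sum_div, sum_add_distrib, hcomm, sum_const, card_univ,
      Fintype.card_fin, nsmul_eq_mul, hc]
    ring
  have hsA (N : ℕ) (i j : Fin N) : |s N i j| ≤ 2 * A := by
    have hc : |c N| ≤ A :=
      (abs_expect_le _ _).trans (expect_le ⟨i, mem_univ i⟩ fun i _ => abs_rowMean_le (hA N) i)
    have hij := abs_le.1 (hA N i j)
    have hji := abs_le.1 (hA N j i)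
    have hc' := abs_le.1 hc
    exact abs_le.2 ⟨by simp only [s]; linarith, by simp only [s]; linarith⟩
  refine (isBigO_expect_gammaStat_odd_pow_of_symm (a := s) ?_ hb hs₀ hb₀ hsA hB m).congr_left
    fun N => ?_
  · intro N i j
    simp only [s, add_comm]
  · simp only [s, gammaStat_symmetrize_sub (hb N) (hb₀ N)]

end BoundedArrays

section Scaling

lemma AsympEquiv.isBigO_symm {x y : ℕ → ℝ} (h : AsympEquiv x y) (hy : ∀ N, 0 ≤ y N) :
    y =O[atTop] x := by
  obtain ⟨c, _, hc, -, hxy⟩ := h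
  refine .of_bound c⁻¹ (hxy.mono fun N hN => ?_)
  rw [Real.norm_of_nonneg (hy N), le_inv_mul_iff₀ hc]
  exact hN.1.trans (le_abs_self _)

lemma isBigO_mul_div_sqrt {A B S T : ℕ → ℝ} (hS₀ : ∀ N, 0 ≤ S N) (hT₀ : ∀ N, 0 ≤ T N)
    (hS : (fun N : ℕ => (N : ℝ) ^ 3 * A N ^ 2) =O[atTop] S)
    (hT : (fun N : ℕ => (N : ℝ) ^ 3 * B N ^ 2) =O[atTop] T) :
    (fun N => A N * B N / (2 * √(S N * T N / (N : ℝ) ^ 3))) =O[atTop]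
      fun N => (√((N : ℝ) ^ 3))⁻¹ := by
  set w : ℕ → ℝ := fun N => √(S N * T N / (N : ℝ) ^ 3)
  have hroot : (fun N : ℕ => √((N : ℝ) ^ 3) * (A N * B N)) =O[atTop] w := by
    refine IsBigO.of_pow two_ne_zero (((hS.mul hT).mul
      (isBigO_refl (fun N : ℕ => ((N : ℝ) ^ 3)⁻¹) atTop)).congr (fun N => ?_) fun N => ?_)
    · rw [Pi.pow_apply, mul_pow, Real.sq_sqrt (by positivity)]
      linear_combination (A N * B N) ^ 2 * mul_self_mul_inv ((N : ℝ) ^ 3)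
    · rw [Pi.pow_apply, Real.sq_sqrt (div_nonneg (mul_nonneg (hS₀ N) (hT₀ N)) (by positivity)),
        div_eq_mul_inv]
  have hratio : (fun N : ℕ => √((N : ℝ) ^ 3) * (A N * B N) * (w N)⁻¹) =O[atTop]
      fun _ => (1 : ℝ) := by
    refine (hroot.mul (isBigO_refl (fun N => (w N)⁻¹) atTop)).trans
      (.of_bound 1 (.of_forall fun N => ?_))
    rw [norm_mul, norm_inv, norm_one, one_mul]
    exact mul_inv_le_one
  refine ((isBigO_refl (fun N : ℕ => (√((N : ℝ) ^ 3))⁻¹) atTop).mul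
    (hratio.const_mul_left 2⁻¹)).congr' ?_ (.of_forall fun N => mul_one _)
  filter_upwards [eventually_gt_atTop 0] with N hN
  have hN₀ : √((N : ℝ) ^ 3) ≠ 0 := by positivity
  simp only [w]
  field_simp

lemma sqrt_pow_three_pow {x : ℝ} (hx : 0 ≤ x) (m : ℕ) :
    √(x ^ 3) ^ (2 * m + 1) = x ^ (3 * m + 1) * √x := by
  have hsqrt : √(x ^ 3) = x * √x := by
    rw [pow_succ, Real.sqrt_mul (sq_nonneg x), Real.sqrt_sq hx]
  rw [pow_succ, pow_mul, Real.sq_sqrt (by positivity), hsqrt]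
  ring

variable {N : ℕ}

lemma abs_le_arrMax (a : Fin N → Fin N → ℝ) (i j : Fin N) : |a i j| ≤ arrMax N a :=
  (le_ciSup (f := fun j => |a i j|) (Set.finite_range _).bddAbove j).trans
    (le_ciSup (f := fun i => ⨆ j, |a i j|) (Set.finite_range _).bddAbove i)

lemma sum_sum_sum_mul_nonneg (a : Fin N → Fin N → ℝ) : 0 ≤ ∑ i, ∑ j, ∑ k, a i j * a i k := by
  simp only [← sum_mul_sum]
  exact sum_nonneg fun i _ => mul_self_nonneg _

lemma abs_div_arrMax_le_one (a : Fin N → Fin N → ℝ) (i j : Fin N) :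
    |a i j / arrMax N a| ≤ 1 := by
  rw [abs_div]
  exact div_le_one_of_le₀ ((abs_le_arrMax a i j).trans (le_abs_self _)) (abs_nonneg _)

lemma gammaStat_eq_arrMax_mul (a b : Fin N → Fin N → ℝ) (π : Perm (Fin N)) :
    gammaStat N a b π = arrMax N a * arrMax N b *
      gammaStat N (fun i j => a i j / arrMax N a) (fun i j => b i j / arrMax N b) π := by
  have hcancel (c : Fin N → Fin N → ℝ) (i j : Fin N) : arrMax N c * (c i j / arrMax N c) = c i j :=
    mul_div_cancel_of_imp' fun h => abs_nonpos_iff.1 (h ▸ abs_le_arrMax c i j)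
  simp only [gammaStat, mul_sum, mul_mul_mul_comm _ (arrMax N b), hcancel]

lemma permE_eq_expect (f : Perm (Fin N) → ℝ) : permE N f = 𝔼 π, f π := by
  rw [permE, Fintype.expect_eq_sum_div_card, Fintype.card_perm, Fintype.card_fin]

end Scaling

theorem odd_scaled_moments_tendsto_zero_general {a b : (N : ℕ) → Fin N → Fin N → ℝ}
    (hb_symm : ∀ N, ∀ i j : Fin N, b N i j = b N j i) (hb_sum : ∀ N, ∑ i, ∑ j, b N i j = 0)
    (hA : (fun N : ℕ => (N : ℝ) ^ 3 * (arrMax N (a N)) ^ 2) =O[atTop]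
      fun N => ∑ i, ∑ j, ∑ k, a N i j * a N i k)
    (hB : (fun N : ℕ => (N : ℝ) ^ 3 * (arrMax N (b N)) ^ 2) =O[atTop]
      fun N => ∑ i, ∑ j, ∑ k, b N i j * b N i k) (m : ℕ) :
    (fun N : ℕ => permE N (fun π =>
        (gammaStat N (a N) (b N) π /
          (2 * Real.sqrt ((∑ i, ∑ j, ∑ k, a N i j * a N i k)
            * (∑ i, ∑ j, ∑ k, b N i j * b N i k) / (N : ℝ) ^ 3))) ^ (2 * m + 1)))
      =O[atTop] fun N => (√(N : ℝ))⁻¹ := by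
  have hscale := (isBigO_mul_div_sqrt (fun N => sum_sum_sum_mul_nonneg (a N))
    (fun N => sum_sum_sum_mul_nonneg (b N)) hA hB).pow (2 * m + 1)
  have hmoment := isBigO_expect_gammaStat_odd_pow
    (a := fun N i j => a N i j / arrMax N (a N)) (b := fun N i j => b N i j / arrMax N (b N))
    (fun N i j => by rw [hb_symm]) (fun N => by simp only [← sum_div, hb_sum, zero_div])
    (fun N => abs_div_arrMax_le_one (a N)) (fun N => abs_div_arrMax_le_one (b N)) m
  refine (hscale.mul hmoment).congr' (.of_forall fun N => ?_) ?_
  · simp only [permE_eq_expect, gammaStat_eq_arrMax_mul (a N) (b N), mul_expect]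
    exact expect_congr rfl fun π _ => by ring
  · filter_upwards [eventually_ne_atTop 0] with N hN
    have : (N : ℝ) ≠ 0 := Nat.cast_ne_zero.2 hN
    rw [inv_pow, sqrt_pow_three_pow N.cast_nonneg]
    field_simp

/-- **Vanishing of odd scaled moments.** -/

theorem odd_scaled_moments_tendsto_zero
    (a b : (N : ℕ) → Fin N → Fin N → ℝ)
    (ha_symm : ∀ N, ∀ i j : Fin N, a N i j = a N j i)
    (hb_symm : ∀ N, ∀ i j : Fin N, b N i j = b N j i)
    (ha_sum : ∀ N, ∑ i, ∑ j, a N i j = 0)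
    (hb_sum : ∀ N, ∑ i, ∑ j, b N i j = 0)
    (hA : AsympEquiv (fun N => ∑ i, ∑ j, ∑ k, a N i j * a N i k)
      (fun N => (N : ℝ) ^ 3 * (arrMax N (a N)) ^ 2))
    (hB : AsympEquiv (fun N => ∑ i, ∑ j, ∑ k, b N i j * b N i k)
      (fun N => (N : ℝ) ^ 3 * (arrMax N (b N)) ^ 2))
    :
    ∀ m : ℕ,
      Tendsto (fun N : ℕ => permE N (fun π =>
          (gammaStat N (a N) (b N) π /
            (2 * Real.sqrt ((∑ i, ∑ j, ∑ k, a N i j * a N i k)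
              * (∑ i, ∑ j, ∑ k, b N i j * b N i k) / (N : ℝ) ^ 3))) ^ (2 * m + 1)))
        atTop (𝓝 0) := by
  intro m
  have hrate := odd_scaled_moments_tendsto_zero_general hb_symm hb_sum
    (hA.isBigO_symm fun N => by positivity) (hB.isBigO_symm fun N => by positivity) m
  exact hrate.trans_tendsto
    (tendsto_inv_atTop_zero.comp (Real.tendsto_sqrt_atTop.comp tendsto_natCast_atTop_atTop))
end
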